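/- arXiv:1705.05225 — 6 statements merged into one kernel-verified Lean document; each statement's English description precedes it below -/
import Mathlib

section
/- For every ε > 0 there exists M such that for every integer m ≥ M, setting n = m^2, the number of order-n Sudoku squares is at most ((1 + ε) · n / e^3)^(n^2). -/
/-!
The proof bounds the number of Sudoku squares by revealing the entries of a square cell by cell,
in a random order, and counting how many symbols are still possible at each step.

Fix an order of the cells. For a square `S` and a cell `c`, let `A c S` be the set of symbols not
yet seen in the row, column or box of `c` when `c` is reached. Filling the cells greedily with
uniformly random available symbols produces `S` with probability `∏ c, 1 / |A c S|`, so these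
products sum to at most `1` over all squares (`sum_prod_inv_card_le_one`). By convexity of `-log`,
the number `N` of squares satisfies `N log N ≤ ∑ S, ∑ c, log |A c S|` (`card_mul_log_card_le`).

Now average over orders: each cell independently receives a uniform level in `Fin K`, lower levels
are revealed first, and ties are broken by a fixed enumeration. Fix `S` and `c`. Except for at most
`2m` symbols, a symbol `x` occurs in the row, the column and the box of `c` at three distinct cells
other than `c` (`IsSudoku.exists_bad`). Given that `c` has level `k`, such an `x` survives with
probability at most `((K - k) / K) ^ 3`. Hence the expected number of available symbols is at most
`2m + n ((K - k) / K) ^ 3` (`sum_card_avail_le`), and Jensen's inequality for `log` yields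
`log N ≤ n² · K⁻¹ ∑ k, log (2m + n ((K - k) / K) ^ 3)` (`log_card_le`).

For fixed `K` and `m → ∞` the average over `k` is `log n + (3 / K) (log K! - K log K) + o(1)`, and
`(log K! - K log K) / K → -1` as `K → ∞`. So a suitable fixed `K` gives a bound below
`log ((1 + ε) n / e³)` for all large `m` (`exists_level_count`).
-/

/-- An order-`m^2` Sudoku square: an `m^2 × m^2` array with entries in `Fin (m^2)` such that
every row, every column, and each of the `m^2` aligned `m × m` boxes contains each symbol
exactly once. -/
def IsSudoku (m : ℕ) (S : Fin (m ^ 2) → Fin (m ^ 2) → Fin (m ^ 2)) : Prop :=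
  (∀ i : Fin (m ^ 2), Function.Bijective (S i)) ∧
  (∀ j : Fin (m ^ 2), Function.Bijective (fun i => S i j)) ∧
  (∀ p q : Fin m, Function.Bijective (fun ab : Fin m × Fin m =>
    S ⟨p.1 * m + ab.1.1, by
        have h1 := p.isLt
        have h2 := ab.1.isLt
        calc p.1 * m + ab.1.1 < p.1 * m + m := by omega
          _ = (p.1 + 1) * m := by ring
          _ ≤ m * m := Nat.mul_le_mul_right m h1
          _ = m ^ 2 := (sq m).symm⟩
      ⟨q.1 * m + ab.2.1, by
        have h1 := q.isLt
        have h2 := ab.2.isLt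
        calc q.1 * m + ab.2.1 < q.1 * m + m := by omega
          _ = (q.1 + 1) * m := by ring
          _ ≤ m * m := Nat.mul_le_mul_right m h1
          _ = m ^ 2 := (sq m).symm⟩))

/-! ### Revealing the cells in a fixed order -/

/-- If `A c S` contains `S c` and depends only on the values of `S` at cells before `c` in the order
given by `r`, then `∏ c, 1 / |A c S|` is the probability that sequential uniform choices produce `S`,
so these products sum to at most `1`. For the induction, only the cells of a final segment `R` are
still unrevealed, and the members of `F` agree on the revealed ones. -/
theorem sum_prod_inv_card_le_one {C X ι : Type*} [DecidableEq C] [DecidableEq X] [LinearOrder ι]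
    (r : C → ι) (hr : Function.Injective r) (A : C → (C → X) → Finset X)
    (hdep : ∀ c S T, (∀ d, r d < r c → S d = T d) → A c S = A c T) (n : ℕ) :
    ∀ (R : Finset C), R.card = n → (∀ c ∈ R, ∀ d, r c ≤ r d → d ∈ R) →
      ∀ F : Finset (C → X), (∀ S ∈ F, ∀ c, S c ∈ A c S) →
        (∀ S ∈ F, ∀ T ∈ F, ∀ c, c ∉ R → S c = T c) →
        ∑ S ∈ F, ∏ c ∈ R, ((A c S).card : ℝ)⁻¹ ≤ 1 := by
  induction n with
  | zero =>
    intro R hR _ F _ hagree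
    obtain rfl := Finset.card_eq_zero.mp hR
    have : F.card ≤ 1 := Finset.card_le_one.mpr fun S hS T hT =>
      funext fun c => hagree S hS T hT c (by simp)
    simpa using this
  | succ n ih =>
    intro R hR hup F hmem hagree
    have hne : R.Nonempty := Finset.card_pos.mp (by omega)
    obtain ⟨c, hcR, hmin⟩ := Finset.exists_min_image R r hne
    rcases F.eq_empty_or_nonempty with rfl | ⟨S₀, hS₀⟩
    · simp
    -- The next cell `c` to be revealed has the same available set for every member of `F`.
    have hA : ∀ S ∈ F, A c S = A c S₀ := fun S hS => hdep c S S₀ fun d hd =>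
      hagree S hS S₀ hS₀ d fun hdR => absurd (hmin d hdR) (not_le.mpr hd)
    have hmaps : ∀ S ∈ F, S c ∈ A c S₀ := fun S hS => hA S hS ▸ hmem S hS c
    rw [← Finset.sum_fiberwise_of_maps_to hmaps]
    have hpos : (0 : ℝ) < (A c S₀).card := by
      exact_mod_cast Finset.card_pos.mpr ⟨_, hmaps S₀ hS₀⟩
    calc ∑ x ∈ A c S₀, ∑ S ∈ F with S c = x, ∏ d ∈ R, ((A d S).card : ℝ)⁻¹
        ≤ ∑ x ∈ A c S₀, ((A c S₀).card : ℝ)⁻¹ := by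
          refine Finset.sum_le_sum fun x _ => ?_
          have h1 : ∑ S ∈ F with S c = x, ∏ d ∈ R, ((A d S).card : ℝ)⁻¹ =
              ((A c S₀).card : ℝ)⁻¹ *
                ∑ S ∈ F with S c = x, ∏ d ∈ R.erase c, ((A d S).card : ℝ)⁻¹ := by
            rw [Finset.mul_sum]
            refine Finset.sum_congr rfl fun S hS => ?_
            rw [← Finset.mul_prod_erase R _ hcR, hA S (Finset.mem_filter.mp hS).1]
          rw [h1]
          refine mul_le_of_le_one_right (by positivity) (ih (R.erase c) ?_ ?_ _ ?_ ?_)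
          · rw [Finset.card_erase_of_mem hcR]; omega
          · intro d hd e hde
            have hd' := Finset.mem_erase.mp hd
            refine Finset.mem_erase.mpr ⟨?_, hup d hd'.2 e hde⟩
            rintro rfl
            exact hd'.1 (hr (le_antisymm hde (hmin d hd'.2)))
          · exact fun S hS => hmem S (Finset.mem_filter.mp hS).1
          · intro S hS T hT d hd
            have hS := Finset.mem_filter.mp hS
            have hT := Finset.mem_filter.mp hT
            by_cases hdc : d = c
            · rw [hdc, hS.2, hT.2]
            · exact hagree S hS.1 T hT.1 d fun h => hd (Finset.mem_erase.mpr ⟨hdc, h⟩)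
      _ = 1 := by
          rw [Finset.sum_const, nsmul_eq_mul]; field_simp

/-- The probabilities `p S = ∏ c, 1 / |A c S|` sum to at most `1` over `F`, so the average of
`-log (p S)` is at least `log |F|`. -/
theorem card_mul_log_card_le {C X ι : Type*} [Fintype C] [DecidableEq C] [DecidableEq X]
    [LinearOrder ι] (r : C → ι) (hr : Function.Injective r) (A : C → (C → X) → Finset X)
    (hdep : ∀ c S T, (∀ d, r d < r c → S d = T d) → A c S = A c T)
    (F : Finset (C → X)) (hmem : ∀ S ∈ F, ∀ c, S c ∈ A c S) :
    (F.card : ℝ) * Real.log F.card ≤ ∑ S ∈ F, ∑ c, Real.log (A c S).card := by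
  have hle := sum_prod_inv_card_le_one r hr A hdep _ Finset.univ rfl (by simp) F hmem (by simp)
  rcases F.eq_empty_or_nonempty with rfl | hne
  · simp
  have hN : (0 : ℝ) < F.card := by exact_mod_cast hne.card_pos
  have hA : ∀ S ∈ F, ∀ c, (0 : ℝ) < (A c S).card := fun S hS c => by
    exact_mod_cast Finset.card_pos.mpr ⟨_, hmem S hS c⟩
  -- This is `log (N p) ≤ N p - 1` with `N = |F|` and `p = ∏ c, 1 / |A c S|`.
  have key : ∀ S ∈ F, Real.log F.card - ∑ c, Real.log (A c S).card ≤
      F.card * (∏ c, ((A c S).card : ℝ)⁻¹) - 1 := by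
    intro S hS
    have hp : (0 : ℝ) < ∏ c, ((A c S).card : ℝ)⁻¹ :=
      Finset.prod_pos fun c _ => inv_pos.mpr (hA S hS c)
    have h := Real.log_le_sub_one_of_pos (mul_pos hN hp)
    rw [Real.log_mul hN.ne' hp.ne',
      Real.log_prod fun c _ => (inv_pos.mpr (hA S hS c)).ne'] at h
    simpa [Real.log_inv, sub_eq_add_neg] using h
  have hsum := Finset.sum_le_sum key
  rw [Finset.sum_sub_distrib, Finset.sum_sub_distrib, ← Finset.mul_sum] at hsum
  simp only [Finset.sum_const, nsmul_eq_mul, mul_one] at hsum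
  nlinarith

/-! ### Random levels -/

/-- The number of level assignments satisfying an independent constraint at each cell, written as the
total number of assignments times a product of probabilities. -/
theorem card_piFinset_eq_mul_prod {C : Type*} [Fintype C] [DecidableEq C] {K : ℕ} (hK : 0 < K)
    (t : C → Finset (Fin K)) :
    ((Fintype.piFinset t).card : ℝ) =
      (K : ℝ) ^ Fintype.card C * ∏ d, ((t d).card / K : ℝ) := by
  have hK : (K : ℝ) ≠ 0 := by exact_mod_cast hK.ne'
  rw [Fintype.card_piFinset, Nat.cast_prod, Finset.prod_div_distrib, Finset.prod_const,
    Finset.card_univ, mul_div_cancel₀ _ (pow_ne_zero _ hK)]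

theorem card_level_eq {C : Type*} [Fintype C] [DecidableEq C] (K : ℕ) (k : Fin K) (c : C) :
    ((Finset.univ.filter fun τ : C → Fin K => τ c = k).card : ℝ) =
      (K : ℝ) ^ Fintype.card C * (K : ℝ)⁻¹ := by
  have hK : 0 < K := (Nat.zero_le _).trans_lt k.isLt
  have hK' : (K : ℝ) ≠ 0 := by exact_mod_cast hK.ne'
  have hset : (Finset.univ.filter fun τ : C → Fin K => τ c = k) =
      Fintype.piFinset (fun d => if d = c then {k} else Finset.univ) := by
    ext τ
    simp only [Finset.mem_filter, Finset.mem_univ, true_and, Fintype.mem_piFinset]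
    constructor
    · intro h d
      split_ifs with h'
      · simp [h', h]
      · simp
    · intro h
      simpa using h c
  rw [hset, card_piFinset_eq_mul_prod hK, Finset.prod_eq_single c]
  · simp
  · intro d _ hd
    simp [hd, hK']
  · simp

/-- Under independent uniform levels, the event that `c` has level `k` while three further distinct
cells have level at least `k` has probability `(1 / K) * ((K - k) / K) ^ 3`. -/
theorem card_level_eq_and_le {C : Type*} [Fintype C] [DecidableEq C] (K : ℕ) (k : Fin K)
    (c d₁ d₂ d₃ : C) (h1 : d₁ ≠ c) (h2 : d₂ ≠ c) (h3 : d₃ ≠ c)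
    (h12 : d₁ ≠ d₂) (h13 : d₁ ≠ d₃) (h23 : d₂ ≠ d₃) :
    ((Finset.univ.filter fun τ : C → Fin K =>
        τ c = k ∧ k ≤ τ d₁ ∧ k ≤ τ d₂ ∧ k ≤ τ d₃).card : ℝ) =
      (K : ℝ) ^ Fintype.card C * ((K : ℝ)⁻¹ * (((K : ℝ) - k) / K) ^ 3) := by
  have hK : 0 < K := (Nat.zero_le _).trans_lt k.isLt
  have hK' : (K : ℝ) ≠ 0 := by exact_mod_cast hK.ne'
  obtain ⟨t, tc, t1, t2, t3, t0⟩ : ∃ t : C → Finset (Fin K), t c = {k} ∧ t d₁ = Finset.Ici k ∧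
      t d₂ = Finset.Ici k ∧ t d₃ = Finset.Ici k ∧
      ∀ d, d ∉ ({c, d₁, d₂, d₃} : Finset C) → t d = Finset.univ := by
    refine ⟨fun d => if d = c then {k} else if d = d₁ ∨ d = d₂ ∨ d = d₃ then Finset.Ici k
      else Finset.univ, by simp, by simp [h1], by simp [h2], by simp [h3], ?_⟩
    intro d hd
    simp only [Finset.mem_insert, Finset.mem_singleton, not_or] at hd
    simp [hd]
  have hset : (Finset.univ.filter fun τ : C → Fin K =>
        τ c = k ∧ k ≤ τ d₁ ∧ k ≤ τ d₂ ∧ k ≤ τ d₃) = Fintype.piFinset t := by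
    ext τ
    simp only [Finset.mem_filter, Finset.mem_univ, true_and, Fintype.mem_piFinset]
    constructor
    · rintro ⟨hc, ha, hb, hd⟩ d
      by_cases h : d ∈ ({c, d₁, d₂, d₃} : Finset C)
      · simp only [Finset.mem_insert, Finset.mem_singleton] at h
        rcases h with rfl | rfl | rfl | rfl
        · simp [tc, hc]
        · simpa [t1] using ha
        · simpa [t2] using hb
        · simpa [t3] using hd
      · simp [t0 d h]
    · intro h
      exact ⟨by simpa [tc] using h c, by simpa [t1] using h d₁, by simpa [t2] using h d₂,
        by simpa [t3] using h d₃⟩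
  have hIci : ((Finset.Ici k).card : ℝ) = K - k := by
    rw [Fin.card_Ici, Nat.cast_sub k.isLt.le]
  rw [hset, card_piFinset_eq_mul_prod hK,
    ← Finset.prod_subset (Finset.subset_univ ({c, d₁, d₂, d₃} : Finset C))]
  · rw [Finset.prod_insert (by simp [h1.symm, h2.symm, h3.symm]),
      Finset.prod_insert (by simp [h12, h13]), Finset.prod_insert (by simp [h23]),
      Finset.prod_singleton, tc, t1, t2, t3, hIci, Finset.card_singleton]
    push_cast
    ring
  · intro d _ hd
    simp [t0 d hd, hK']

/-- The symbols still available at the cell `c`: those that `S` does not place at a cell of `nbr c`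
revealed strictly before `c`, where `r` assigns revelation times. Cells with equal times do not
exclude each other. -/
def avail {C X ι : Type*} [Fintype X] [DecidableEq X] [LinearOrder ι]
    (nbr : C → Finset C) (r : C → ι) (c : C) (S : C → X) : Finset X :=
  Finset.univ.filter fun x => ∀ d ∈ nbr c, r d < r c → S d ≠ x

/-- Expected number of symbols available at `c` on the event that `c` has level `k`: the at most `b`
symbols of `bad` are counted with probability `1`, and every other symbol survives only if each of
its three occurrences among the neighbours of `c` has level at least `k`. -/
theorem sum_card_avail_le {C X : Type*} [Fintype C] [DecidableEq C] [Fintype X] [DecidableEq X]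
    (nbr : C → Finset C) (c : C) (hc : c ∉ nbr c) (S : C → X) (bad : Finset X) (b : ℕ)
    (hb : bad.card ≤ b)
    (hgood : ∀ x ∉ bad, ∃ d₁ ∈ nbr c, ∃ d₂ ∈ nbr c, ∃ d₃ ∈ nbr c,
      d₁ ≠ d₂ ∧ d₁ ≠ d₃ ∧ d₂ ≠ d₃ ∧ S d₁ = x ∧ S d₂ = x ∧ S d₃ = x)
    (K : ℕ) (k : Fin K) :
    ∑ τ : C → Fin K with τ c = k, ((avail nbr τ c S).card : ℝ) ≤
      (K : ℝ) ^ Fintype.card C * (K : ℝ)⁻¹ *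
        (b + Fintype.card X * (((K : ℝ) - k) / K) ^ 3) := by
  have hkK : (0 : ℝ) ≤ (K : ℝ) - k := sub_nonneg.mpr (by exact_mod_cast k.isLt.le)
  set P : ℝ := (K : ℝ) ^ Fintype.card C * (K : ℝ)⁻¹ with hP
  set q : ℝ := ((K : ℝ) - k) / K with hq
  have hP0 : 0 ≤ P := by positivity
  have hq0 : 0 ≤ q := by positivity
  -- Linearity of expectation: the sizes are summed symbol by symbol.
  have hswap : ∑ τ : C → Fin K with τ c = k, ((avail nbr τ c S).card : ℝ) =
      ∑ x : X, ((Finset.univ.filter fun τ : C → Fin K =>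
        τ c = k ∧ x ∈ avail nbr τ c S).card : ℝ) := by
    simp_rw [← Finset.filter_filter, Finset.card_eq_sum_ones, Finset.sum_filter]
    push_cast
    rw [Finset.sum_comm]
    refine Finset.sum_congr rfl fun τ _ => ?_
    split_ifs with h
    · rw [← Finset.sum_filter]
      simp
    · simp
  have hterm : ∀ x : X, ((Finset.univ.filter fun τ : C → Fin K =>
        τ c = k ∧ x ∈ avail nbr τ c S).card : ℝ) ≤
      (if x ∈ bad then P else 0) + P * q ^ 3 := by
    intro x
    split_ifs with hx
    · refine le_add_of_le_of_nonneg ?_ (by positivity)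
      rw [hP, ← card_level_eq K k c]
      refine Nat.cast_le.mpr (Finset.card_le_card (Finset.monotone_filter_right _ ?_))
      exact fun τ _ h => h.1
    · obtain ⟨d₁, n1, d₂, n2, d₃, n3, h12, h13, h23, rfl, h2, h3⟩ := hgood x hx
      have hne : ∀ d ∈ nbr c, d ≠ c := fun d hd h => hc (h ▸ hd)
      rw [zero_add, hP, mul_assoc, hq, ← card_level_eq_and_le K k c d₁ d₂ d₃ (hne _ n1)
        (hne _ n2) (hne _ n3) h12 h13 h23]
      refine Nat.cast_le.mpr (Finset.card_le_card (Finset.monotone_filter_right _ ?_))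
      rintro τ - ⟨rfl, h⟩
      simp only [avail, Finset.mem_filter, Finset.mem_univ, true_and] at h
      exact ⟨rfl, not_lt.mp fun hl => h d₁ n1 hl rfl, not_lt.mp fun hl => h d₂ n2 hl h2,
        not_lt.mp fun hl => h d₃ n3 hl h3⟩
  rw [hswap]
  calc _ ≤ ∑ x : X, ((if x ∈ bad then P else 0) + P * q ^ 3) := Finset.sum_le_sum fun x _ => hterm x
    _ = P * (bad.card + Fintype.card X * q ^ 3) := by
      rw [Finset.sum_add_distrib, ← Finset.sum_filter]
      simp
      ring
    _ ≤ _ := by gcongr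

/-- Bound on the number of proper colourings `S` of a conflict structure `nbr` for which, around
every cell, all but `b` symbols occur at three distinct neighbours. The orders used are given by
uniform levels in `Fin K`. -/
theorem log_card_le {C X : Type*} [Fintype C] [DecidableEq C] [Fintype X] [DecidableEq X]
    [Nonempty X] (nbr : C → Finset C) (hnbr : ∀ c, c ∉ nbr c) (b : ℕ) (F : Finset (C → X))
    (hF : F.Nonempty) (hproper : ∀ S ∈ F, ∀ c, ∀ d ∈ nbr c, S d ≠ S c)
    (hgood : ∀ S ∈ F, ∀ c, ∃ bad : Finset X, bad.card ≤ b ∧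
      ∀ x ∉ bad, ∃ d₁ ∈ nbr c, ∃ d₂ ∈ nbr c, ∃ d₃ ∈ nbr c,
        d₁ ≠ d₂ ∧ d₁ ≠ d₃ ∧ d₂ ≠ d₃ ∧ S d₁ = x ∧ S d₂ = x ∧ S d₃ = x)
    (K : ℕ) (hK : 0 < K) :
    Real.log F.card ≤ Fintype.card C * ((K : ℝ)⁻¹ *
      ∑ k : Fin K, Real.log (b + Fintype.card X * (((K : ℝ) - k) / K) ^ 3)) := by
  set a : Fin K → ℝ := fun k => b + Fintype.card X * (((K : ℝ) - k) / K) ^ 3 with ha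
  have hK0 : (0 : ℝ) < K := by exact_mod_cast hK
  have ha0 : ∀ k, 0 < a k := by
    intro k
    have h1 : (0 : ℝ) < (K : ℝ) - k := sub_pos.mpr (by exact_mod_cast k.isLt)
    have h2 : (0 : ℝ) < Fintype.card X := by exact_mod_cast Fintype.card_pos
    simp only [ha]
    positivity
  set W : ℝ := (K : ℝ) ^ Fintype.card C with hW
  have hW0 : 0 < W := by positivity
  -- Cells are revealed by level, with ties broken by a fixed enumeration of the cells.
  let r : (C → Fin K) → C → Fin K ×ₗ Fin (Fintype.card C) :=
    fun τ d => toLex (τ d, Fintype.equivFin C d)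
  have hr : ∀ τ, Function.Injective (r τ) := fun τ d e h =>
    (Fintype.equivFin C).injective (congrArg (fun p => (ofLex p).2) h)
  have hmem : ∀ τ, ∀ S ∈ F, ∀ c, S c ∈ avail nbr (r τ) c S := fun τ S hS c => by
    simpa [avail] using fun d hd _ => hproper S hS c d hd
  have horder : ∀ τ : C → Fin K,
      (F.card : ℝ) * Real.log F.card ≤ ∑ S ∈ F, ∑ c, Real.log (avail nbr (r τ) c S).card := by
    refine fun τ => card_mul_log_card_le (r τ) (hr τ) (avail nbr (r τ)) ?_ F (hmem τ)
    intro c S T h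
    ext x
    simp only [avail, Finset.mem_filter, Finset.mem_univ, true_and]
    exact forall₂_congr fun d _ => forall_congr' fun hd => by rw [h d hd]
  -- Breaking ties only reveals more cells before `c`.
  have hsub : ∀ (τ : C → Fin K) (c : C) (S : C → X), avail nbr (r τ) c S ⊆ avail nbr τ c S := by
    intro τ c S x hx
    simp only [avail, Finset.mem_filter, Finset.mem_univ, true_and] at hx ⊢
    exact fun d hd hlt => hx d hd (Prod.Lex.toLex_lt_toLex.mpr (Or.inl hlt))
  -- Jensen's inequality for `log` enters through the tangent at `a (τ c)`, the bound on the
  -- conditional expectation of the number of available symbols.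
  have htan : ∀ τ, ∀ S ∈ F, ∀ c, Real.log (avail nbr (r τ) c S).card ≤
      Real.log (a (τ c)) - 1 + (avail nbr τ c S).card / a (τ c) := by
    intro τ S hS c
    have hpos : (0 : ℝ) < (avail nbr (r τ) c S).card := by
      exact_mod_cast Finset.card_pos.mpr ⟨_, hmem τ S hS c⟩
    have h := Real.log_le_sub_one_of_pos (div_pos hpos (ha0 (τ c)))
    rw [Real.log_div hpos.ne' (ha0 _).ne'] at h
    have h2 : ((avail nbr (r τ) c S).card : ℝ) / a (τ c) ≤ (avail nbr τ c S).card / a (τ c) := by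
      have := ha0 (τ c)
      have h3 := Finset.card_le_card (hsub τ c S)
      gcongr
    linarith
  have hcell : ∀ S ∈ F, ∀ c, ∑ τ : C → Fin K, Real.log (avail nbr (r τ) c S).card ≤
      W * ((K : ℝ)⁻¹ * ∑ k, Real.log (a k)) := by
    intro S hS c
    obtain ⟨bad, hb, hg⟩ := hgood S hS c
    rw [← Finset.sum_fiberwise Finset.univ (fun τ : C → Fin K => τ c), Finset.mul_sum,
      Finset.mul_sum]
    refine Finset.sum_le_sum fun k _ => ?_
    calc _ ≤ ∑ τ : C → Fin K with τ c = k,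
          ((Real.log (a k) - 1) + (avail nbr τ c S).card / a k) := by
          refine Finset.sum_le_sum fun τ hτ => ?_
          have h := htan τ S hS c
          rwa [(Finset.mem_filter.mp hτ).2] at h
      _ = W * (K : ℝ)⁻¹ * (Real.log (a k) - 1) +
          (∑ τ : C → Fin K with τ c = k, ((avail nbr τ c S).card : ℝ)) / a k := by
          rw [Finset.sum_add_distrib, Finset.sum_const, nsmul_eq_mul, card_level_eq,
            Finset.sum_div]
      _ ≤ W * (K : ℝ)⁻¹ * (Real.log (a k) - 1) + (W * (K : ℝ)⁻¹ * a k) / a k := by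
          have := ha0 k
          gcongr
          exact sum_card_avail_le nbr c (hnbr c) S bad b hb hg K k
      _ = _ := by
          rw [mul_div_assoc, div_self (ha0 k).ne']
          ring
  have hN : (0 : ℝ) < F.card := by exact_mod_cast hF.card_pos
  have htot : W * (F.card * Real.log F.card) ≤
      F.card * (Fintype.card C * (W * ((K : ℝ)⁻¹ * ∑ k, Real.log (a k)))) := by
    calc W * (F.card * Real.log F.card)
        = ∑ τ : C → Fin K, (F.card : ℝ) * Real.log F.card := by
          simp [hW]
      _ ≤ ∑ τ : C → Fin K, ∑ S ∈ F, ∑ c, Real.log (avail nbr (r τ) c S).card :=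
          Finset.sum_le_sum fun τ _ => horder τ
      _ = ∑ S ∈ F, ∑ c, ∑ τ : C → Fin K, Real.log (avail nbr (r τ) c S).card := by
          rw [Finset.sum_comm]
          exact Finset.sum_congr rfl fun S _ => Finset.sum_comm
      _ ≤ ∑ S ∈ F, ∑ c : C, W * ((K : ℝ)⁻¹ * ∑ k, Real.log (a k)) :=
          Finset.sum_le_sum fun S hS => Finset.sum_le_sum fun c _ => hcell S hS c
      _ = _ := by simp
  refine le_of_mul_le_mul_left ?_ (mul_pos hW0 hN)
  linarith

/-! ### Asymptotics of the averaged logarithm -/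

section Asymptotics

open Filter Topology

theorem log_factorial_le (K : ℕ) (hK : 1 ≤ K) :
    Real.log (K.factorial : ℝ) ≤ K * Real.log K - K + 1 + Real.log K := by
  induction K, hK using Nat.le_induction with
  | base => simp
  | succ K hK ih =>
    have hK0 : (0 : ℝ) < K := by exact_mod_cast hK
    have h := Real.log_le_sub_one_of_pos (div_pos hK0 (by positivity : (0 : ℝ) < K + 1))
    rw [Real.log_div hK0.ne' (by positivity)] at h
    have h2 : (K + 1 : ℝ) * (Real.log K - Real.log (K + 1)) ≤ (K + 1) * (K / (K + 1) - 1) := by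
      gcongr
    have h3 : (K + 1 : ℝ) * (K / (K + 1) - 1) = -1 := by field_simp; ring
    rw [Nat.factorial_succ]
    push_cast
    rw [Real.log_mul (by positivity) (by positivity)]
    nlinarith

/-- The sum is a Riemann sum for `∫ u in 0..1, log (u ^ 3) = -3`; it is evaluated as
`3 (log K! - K log K) / K`. -/
theorem exists_riemann_sum_lt (δ : ℝ) (hδ : 0 < δ) : ∃ K : ℕ, 0 < K ∧
    (K : ℝ)⁻¹ * ∑ k : Fin K, Real.log ((((K : ℝ) - k) / K) ^ 3) < -3 + δ := by
  have hlim : Tendsto (fun K : ℕ => 3 * (1 / (K : ℝ) + Real.log K / K)) atTop (𝓝 0) := by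
    have h1 : Tendsto (fun K : ℕ => 1 / (K : ℝ)) atTop (𝓝 0) := tendsto_one_div_atTop_nhds_zero_nat
    have h2 : Tendsto (fun K : ℕ => Real.log K / (K : ℝ)) atTop (𝓝 0) :=
      Real.isLittleO_log_id_atTop.tendsto_div_nhds_zero.comp tendsto_natCast_atTop_atTop
    simpa using (h1.add h2).const_mul 3
  obtain ⟨K, hlt, hK⟩ := ((hlim.eventually (gt_mem_nhds hδ)).and (eventually_ge_atTop 1)).exists
  refine ⟨K, hK, ?_⟩
  have hK0 : (0 : ℝ) < K := by exact_mod_cast hK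
  have hsum : ∑ k : Fin K, Real.log ((((K : ℝ) - k) / K) ^ 3) =
      3 * (Real.log K.factorial - K * Real.log K) := by
    have hterm : ∀ k : Fin K, Real.log ((((K : ℝ) - k) / K) ^ 3) =
        3 * (Real.log ((Fin.rev k : ℕ) + 1 : ℝ) - Real.log K) := by
      intro k
      have h1 : (0 : ℝ) < (K : ℝ) - k := sub_pos.mpr (by exact_mod_cast k.isLt)
      have h2 : ((Fin.rev k : ℕ) + 1 : ℝ) = K - k := by
        have := k.isLt
        rw [Fin.val_rev, Nat.cast_sub (by omega)]
        push_cast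
        ring
      rw [h2, Real.log_pow, Real.log_div h1.ne' hK0.ne']
      norm_num
    have hfac : Real.log (K.factorial : ℝ) = ∑ k : Fin K, Real.log ((k : ℕ) + 1 : ℝ) := by
      rw [← Finset.prod_range_add_one_eq_factorial, ← Fin.prod_univ_eq_prod_range
        (fun i => i + 1), Nat.cast_prod, Real.log_prod fun i _ => by positivity]
      simp
    rw [Finset.sum_congr rfl fun k _ => hterm k, ← Finset.mul_sum, Finset.sum_sub_distrib, hfac,
      ← Equiv.sum_comp Fin.revPerm (fun k : Fin K => Real.log ((k : ℕ) + 1 : ℝ))]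
    simp
  have hf := log_factorial_le K hK
  rw [hsum]
  calc (K : ℝ)⁻¹ * (3 * (Real.log K.factorial - K * Real.log K))
      ≤ (K : ℝ)⁻¹ * (3 * (- K + 1 + Real.log K)) := by gcongr; linarith
    _ = -3 + 3 * (1 / (K : ℝ) + Real.log K / K) := by field_simp; ring
    _ < _ := by linarith

/-- One fixed number of levels `K` suffices for all large `m`: after extracting `log (m ^ 2)`, the
term `2 * m` contributes only `2 / m` inside the logarithm. -/
theorem exists_level_count (ε : ℝ) (hε : 0 < ε) : ∃ K : ℕ, 0 < K ∧ ∃ M : ℕ, ∀ m : ℕ, M ≤ m →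
    0 < m ∧ (K : ℝ)⁻¹ * ∑ k : Fin K,
      Real.log (((2 * m : ℕ) : ℝ) + ((m ^ 2 : ℕ) : ℝ) * (((K : ℝ) - k) / K) ^ 3) ≤
        Real.log ((1 + ε) * (m ^ 2 : ℝ) / Real.exp 3) := by
  have hδ : 0 < Real.log (1 + ε) := Real.log_pos (by linarith)
  obtain ⟨K, hK, hlt⟩ := exists_riemann_sum_lt _ hδ
  have hK0 : (0 : ℝ) < K := by exact_mod_cast hK
  refine ⟨K, hK, ?_⟩
  have hq : ∀ k : Fin K, (0 : ℝ) < (((K : ℝ) - k) / K) ^ 3 := fun k => by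
    have h1 : (0 : ℝ) < (K : ℝ) - k := sub_pos.mpr (by exact_mod_cast k.isLt)
    positivity
  have hlim : Tendsto (fun m : ℕ => (K : ℝ)⁻¹ * ∑ k : Fin K,
      Real.log (2 * (1 / (m : ℝ)) + (((K : ℝ) - k) / K) ^ 3)) atTop
      (𝓝 ((K : ℝ)⁻¹ * ∑ k : Fin K, Real.log ((((K : ℝ) - k) / K) ^ 3))) := by
    refine Tendsto.const_mul _ (tendsto_finsetSum _ fun k _ => ?_)
    have h1 : Tendsto (fun m : ℕ => 1 / (m : ℝ)) atTop (𝓝 0) := tendsto_one_div_atTop_nhds_zero_nat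
    have h2 := (h1.const_mul 2).add_const ((((K : ℝ) - k) / K) ^ 3)
    rw [mul_zero, zero_add] at h2
    exact h2.log (hq k).ne'
  obtain ⟨M, hM⟩ := eventually_atTop.mp
    ((hlim.eventually (gt_mem_nhds hlt)).and (eventually_ge_atTop 1))
  refine ⟨M, fun m hm => ?_⟩
  obtain ⟨hm1, hm0⟩ := hM m hm
  refine ⟨hm0, ?_⟩
  have hm' : (0 : ℝ) < m := by exact_mod_cast hm0
  have hterm : ∀ k : Fin K,
      Real.log (((2 * m : ℕ) : ℝ) + ((m ^ 2 : ℕ) : ℝ) * (((K : ℝ) - k) / K) ^ 3) =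
      Real.log ((m : ℝ) ^ 2) + Real.log (2 * (1 / (m : ℝ)) + (((K : ℝ) - k) / K) ^ 3) := by
    intro k
    have := hq k
    rw [← Real.log_mul (by positivity) (by positivity)]
    congr 1
    push_cast
    field_simp
  rw [Finset.sum_congr rfl fun k _ => hterm k, Finset.sum_add_distrib, mul_add,
    Real.log_div (by positivity) (Real.exp_pos 3).ne', Real.log_mul (by positivity) (by positivity),
    Real.log_exp]
  simp only [Finset.sum_const, Finset.card_univ, Fintype.card_fin, nsmul_eq_mul]
  rw [inv_mul_cancel_left₀ hK0.ne']
  linarith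

end Asymptotics

/-! ### The geometry of Sudoku squares -/

theorem exists_block {m : ℕ} (i : Fin (m ^ 2)) :
    ∃ p a : Fin m, (i : ℕ) = p.1 * m + a.1 := by
  have hi := i.isLt
  have hm : 0 < m := by
    rcases Nat.eq_zero_or_pos m with rfl | h
    · simp at hi
    · exact h
  refine ⟨⟨i / m, Nat.div_lt_of_lt_mul (by rwa [← sq])⟩, ⟨i % m, Nat.mod_lt _ hm⟩, ?_⟩
  exact (Nat.div_add_mod' _ _).symm

theorem block_div {m : ℕ} (p a : Fin m) : (p.1 * m + a.1) / m = p := by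
  rw [mul_comm, Nat.mul_add_div (Fin.pos p), Nat.div_eq_of_lt a.isLt, add_zero]

/-- The cells other than `c` that share a row, a column or a box with `c`. Two cells lie in the same
box when their row indices and their column indices have equal quotients by `m`. -/
def nbr (m : ℕ) (c : Fin (m ^ 2) × Fin (m ^ 2)) : Finset (Fin (m ^ 2) × Fin (m ^ 2)) :=
  Finset.univ.filter fun d => d ≠ c ∧ (d.1 = c.1 ∨ d.2 = c.2 ∨
    (d.1.1 / m = c.1.1 / m ∧ d.2.1 / m = c.2.1 / m))

theorem IsSudoku.box_eq {m : ℕ} {S : Fin (m ^ 2) → Fin (m ^ 2) → Fin (m ^ 2)}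
    (hS : IsSudoku m S) {i j i' j' : Fin (m ^ 2)} (hi : i.1 / m = i'.1 / m)
    (hj : j.1 / m = j'.1 / m) (h : S i j = S i' j') : i = i' ∧ j = j' := by
  obtain ⟨p, a, hpa⟩ := exists_block i
  obtain ⟨q, b, hqb⟩ := exists_block j
  obtain ⟨p', a', hpa'⟩ := exists_block i'
  obtain ⟨q', b', hqb'⟩ := exists_block j'
  rw [hpa, hpa', block_div, block_div] at hi
  rw [hqb, hqb', block_div, block_div] at hj
  obtain rfl := Fin.ext hi
  obtain rfl := Fin.ext hj
  have hinj : (a, b) = (a', b') := (hS.2.2 p q).injective (by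
    convert h using 2 <;> exact Fin.ext (by simp [*]))
  simp only [Prod.mk.injEq] at hinj
  exact ⟨Fin.ext (by rw [hpa, hpa', hinj.1]), Fin.ext (by rw [hqb, hqb', hinj.2])⟩

theorem IsSudoku.exists_box {m : ℕ} {S : Fin (m ^ 2) → Fin (m ^ 2) → Fin (m ^ 2)}
    (hS : IsSudoku m S) (i j x : Fin (m ^ 2)) :
    ∃ i' j', i'.1 / m = i.1 / m ∧ j'.1 / m = j.1 / m ∧ S i' j' = x := by
  obtain ⟨p, a, hpa⟩ := exists_block i
  obtain ⟨q, b, hqb⟩ := exists_block j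
  obtain ⟨ab, hab⟩ := (hS.2.2 p q).surjective x
  exact ⟨_, _, by rw [hpa, block_div, block_div], by rw [hqb, block_div, block_div], hab⟩

theorem card_block_le {m : ℕ} (i : Fin (m ^ 2)) :
    (Finset.univ.filter fun i' : Fin (m ^ 2) => i'.1 / m = i.1 / m).card ≤ m := by
  have hm : 0 < m := by
    obtain ⟨p, -, -⟩ := exists_block i
    exact Fin.pos p
  have h := Finset.card_le_card_of_injOn (s := Finset.univ.filter fun i' : Fin (m ^ 2) =>
    i'.1 / m = i.1 / m) (t := Finset.range m) (fun i' => i'.1 % m)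
    (fun i' _ => Finset.mem_coe.mpr (Finset.mem_range.mpr (Nat.mod_lt _ hm))) (by
      intro x hx y hy hxy
      simp only [Finset.coe_filter, Finset.mem_univ, true_and, Set.mem_ofPred_eq] at hx hy
      refine Fin.ext ?_
      rw [← Nat.div_add_mod x.1 m, ← Nat.div_add_mod y.1 m, hx, hy]
      exact congrArg _ hxy)
  simpa using h

/-- The exceptional symbols are those in the row of `c` inside its box and those in the column of `c`
inside its box. Any other symbol occurs in the row and in the column of `c` outside the box, so these
two cells and the cell of the box carrying the symbol are distinct. -/
theorem IsSudoku.exists_bad {m : ℕ} {S : Fin (m ^ 2) → Fin (m ^ 2) → Fin (m ^ 2)}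
    (hS : IsSudoku m S) (c : Fin (m ^ 2) × Fin (m ^ 2)) :
    ∃ bad : Finset (Fin (m ^ 2)), bad.card ≤ 2 * m ∧
      ∀ x ∉ bad, ∃ d₁ ∈ nbr m c, ∃ d₂ ∈ nbr m c, ∃ d₃ ∈ nbr m c,
        d₁ ≠ d₂ ∧ d₁ ≠ d₃ ∧ d₂ ≠ d₃ ∧
          Function.uncurry S d₁ = x ∧ Function.uncurry S d₂ = x ∧ Function.uncurry S d₃ = x := by
  obtain ⟨i, j⟩ := c
  refine ⟨(Finset.univ.filter fun j' : Fin (m ^ 2) => j'.1 / m = j.1 / m).image (S i) ∪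
    (Finset.univ.filter fun i' : Fin (m ^ 2) => i'.1 / m = i.1 / m).image (fun i' => S i' j),
    ?_, ?_⟩
  · refine (Finset.card_union_le _ _).trans ?_
    have h1 := (Finset.card_image_le (f := S i)).trans (card_block_le j)
    have h2 := (Finset.card_image_le (f := fun i' => S i' j)).trans (card_block_le i)
    omega
  · intro x hx
    simp only [Finset.mem_union, Finset.mem_image, Finset.mem_filter, Finset.mem_univ, true_and,
      not_or, not_exists, not_and] at hx
    obtain ⟨hx1, hx2⟩ := hx
    obtain ⟨j₁, h1⟩ := (hS.1 i).surjective x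
    obtain ⟨i₂, h2⟩ := (hS.2.1 j).surjective x
    obtain ⟨i₃, j₃, hi₃, hj₃, h3⟩ := hS.exists_box i j x
    have hj₁ : j₁.1 / m ≠ j.1 / m := fun h => hx1 j₁ h h1
    have hi₂ : i₂.1 / m ≠ i.1 / m := fun h => hx2 i₂ h h2
    have hj₁' : j₁ ≠ j := fun h => hj₁ (by rw [h])
    have hi₂' : i₂ ≠ i := fun h => hi₂ (by rw [h])
    refine ⟨(i, j₁), ?_, (i₂, j), ?_, (i₃, j₃), ?_, ?_, ?_, ?_, h1, h2, h3⟩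
    · simp [nbr, hj₁']
    · simp [nbr, hi₂']
    · have : ¬ (i₃ = i ∧ j₃ = j) := by
        rintro ⟨rfl, rfl⟩
        exact hx1 j₃ rfl h3
      simpa [nbr, hi₃, hj₃] using this
    · exact fun h => hj₁' (congrArg Prod.snd h)
    · exact fun h => hj₁ (by rw [show j₁ = j₃ from congrArg Prod.snd h, hj₃])
    · exact fun h => hi₂ (by rw [show i₂ = i₃ from congrArg Prod.fst h, hi₃])

theorem IsSudoku.ne_of_mem_nbr {m : ℕ} {S : Fin (m ^ 2) → Fin (m ^ 2) → Fin (m ^ 2)}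
    (hS : IsSudoku m S) (c d : Fin (m ^ 2) × Fin (m ^ 2)) (hd : d ∈ nbr m c) :
    Function.uncurry S d ≠ Function.uncurry S c := by
  obtain ⟨i, j⟩ := c
  obtain ⟨i', j'⟩ := d
  simp only [nbr, Finset.mem_filter, Finset.mem_univ, true_and] at hd
  obtain ⟨hne, rfl | rfl | ⟨h1, h2⟩⟩ := hd
  · exact fun h => hne (Prod.ext rfl ((hS.1 i').injective h))
  · exact fun h => hne (Prod.ext ((hS.2.1 j').injective h) rfl)
  · exact fun h => hne (Prod.ext_iff.mpr (hS.box_eq h1 h2 h))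

/-! ### The upper bound -/

theorem sudoku_upper_bound :
    ∀ ε : ℝ, 0 < ε → ∃ M : ℕ, ∀ m : ℕ, M ≤ m →
      (Nat.card {S : Fin (m ^ 2) → Fin (m ^ 2) → Fin (m ^ 2) // IsSudoku m S} : ℝ) ≤
        ((1 + ε) * (m ^ 2 : ℝ) / Real.exp 3) ^ ((m ^ 2) ^ 2) := by
  intro ε hε
  obtain ⟨K, hK, M, hM⟩ := exists_level_count ε hε
  refine ⟨M, fun m hm => ?_⟩
  obtain ⟨hm0, hlog⟩ := hM m hm
  have hm' : (0 : ℝ) < m := by exact_mod_cast hm0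
  have hB : 0 < (1 + ε) * (m ^ 2 : ℝ) / Real.exp 3 := by positivity
  classical
  let F : Finset (Fin (m ^ 2) × Fin (m ^ 2) → Fin (m ^ 2)) :=
    (Finset.univ.filter fun S => IsSudoku m S).image Function.uncurry
  have hcard : Nat.card {S : Fin (m ^ 2) → Fin (m ^ 2) → Fin (m ^ 2) // IsSudoku m S} =
      F.card := by
    rw [Nat.card_eq_fintype_card, Fintype.card_subtype, Finset.card_image_of_injective]
    exact Function.uncurry_injective
  have hF : ∀ S ∈ F, ∃ T, IsSudoku m T ∧ Function.uncurry T = S := fun S hS => by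
    simpa [F] using hS
  rw [hcard]
  rcases F.eq_empty_or_nonempty with h0 | hne
  · rw [h0, Finset.card_empty, Nat.cast_zero]
    positivity
  have : Nonempty (Fin (m ^ 2)) := ⟨⟨0, by positivity⟩⟩
  have hmain := log_card_le (nbr m) (fun c => by simp [nbr]) (2 * m) F hne
    (fun S hS c d hd => by
      obtain ⟨T, hT, rfl⟩ := hF S hS
      exact hT.ne_of_mem_nbr c d hd)
    (fun S hS c => by
      obtain ⟨T, hT, rfl⟩ := hF S hS
      exact hT.exists_bad c) K hK
  rw [Fintype.card_prod, Fintype.card_fin] at hmain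
  have hN : (0 : ℝ) < F.card := by exact_mod_cast hne.card_pos
  rw [← Real.log_le_log_iff hN (by positivity), Real.log_pow]
  refine hmain.trans ?_
  rw [sq (m ^ 2)]
  gcongr
end

section
/- Fix integers q > r ≥ 1. For every ε > 0 there exists N such that for every integer n ≥ N, the number of (n, q, r)-Steiner systems is at most ((1 + ε) · C(n, q−r) / e^(C(q,r) − 1))^(C(n,r) / C(q,r)), where C(a,b) denotes the binomial coefficient. -/
/-- An `(n, q, r)`-Steiner system: a collection of `q`-element subsets of `Fin n` such that
every `r`-element subset of `Fin n` is contained in exactly one member of the collection. -/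
def IsSteinerSystem (n q r : ℕ) (S : Finset (Finset (Fin n))) : Prop :=
  (∀ e ∈ S, e.card = q) ∧
  (∀ t : Finset (Fin n), t.card = r → ∃! e, e ∈ S ∧ t ⊆ e)

/-!
The proof is the entropy method. Write `Q = q.choose r`, `C = n.choose (q - r)`, and for a Steiner
system `X` and an `r`-set `t` let `block X t` be the member of `X` containing `t`. Give every set
an independent uniform label in `Fin M` and reveal the blocks of `r`-sets in decreasing order of
label. If `N_t(X)` counts the values `block Y t` over systems `Y` agreeing with `X` on
all labels strictly above that of `t`, the chain rule for entropy (`entropy_chain`) says that the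
logarithm of the number of systems is at most the average over `X` of `∑ t, log N_t(X)`, for every
labelling.

Fix `X` and `t` and average over labellings. Let `t` have the `k`-th label (from `0`) and put
`x = (k + 1) / M`. If some `r`-subset of the block of `t` has a higher label, then `N_t(X) = 1`.
Otherwise (probability `x ^ (Q - 1)`) a `q`-set `f` containing `t` is counted only if no `r`-subset
of a block of `X` sharing an `r`-set with `f` has a higher label. Such an `f` whose `r`-subsets
lie in distinct blocks involves `Q * Q` many `r`-sets, so it is counted with conditional
probability `x ^ (Q * Q - Q)`; there are only `O(n ^ (q - r - 1))`, at most `δ * C`, other `f`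
(`card_bad`). Using `log N ≤ log c + N / c - 1` with `c = C * (x ^ (Q * Q - Q) + δ)` gives
(`log_card_le`)
`log #S ≤ n.choose r * (1 / M) * ∑ k, x ^ (Q - 1) * log (C * (x ^ (Q * Q - Q) + δ))`.
Since `n` is fixed while `M` is free, the Riemann sum is within any error of
`∫ x in 0..1, x ^ (Q - 1) * (log C + (Q * Q - Q) * log x) = (log C - (Q - 1)) / Q`
(`exists_mesh`), the effect of `δ` being uniformly small (`exists_smoothing`).
-/

/-! ### The chain rule for entropy -/

/-- The values `v Y t` compatible with what is known of `X` when `t` is revealed: `Y` ranges over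
the members of `S` agreeing with `X` at all points of `T` of key strictly larger than that of `t`.
Points with equal keys do not see each other, so keys may have ties. -/
def histValues {σ α β κ : Type*} [DecidableEq β] [LinearOrder κ] (S : Finset σ) (v : σ → α → β)
    (T : Finset α) (key : α → κ) (t : α) (X : σ) : Finset β :=
  (S.filter fun Y => ∀ s ∈ T, key t < key s → v Y s = v X s).image fun Y => v Y t

theorem mem_histValues {σ α β κ : Type*} [DecidableEq β] [LinearOrder κ] {S : Finset σ}
    {v : σ → α → β} {T : Finset α} {key : α → κ} {t : α} {X : σ} {b : β} :
    b ∈ histValues S v T key t X ↔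
      ∃ Y ∈ S, (∀ s ∈ T, key t < key s → v Y s = v X s) ∧ v Y t = b := by
  simp [histValues, and_assoc]

theorem card_histValues_pos {σ α β κ : Type*} [DecidableEq β] [LinearOrder κ] {S : Finset σ}
    (v : σ → α → β) (T : Finset α) (key : α → κ) (t : α) {X : σ} (hX : X ∈ S) :
    0 < (histValues S v T key t X).card :=
  Finset.card_pos.2 ⟨v X t, mem_histValues.2 ⟨X, hX, fun _ _ _ => rfl, rfl⟩⟩

/-- The grouping inequality: the entropy of a distribution on `I` is at most `log #I`, here for the
weights `x b` scaled by their total. -/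
theorem sum_mul_log_le {β : Type*} (I : Finset β) (x : β → ℝ) (hx : ∀ b ∈ I, 0 < x b) :
    (∑ b ∈ I, x b) * Real.log (∑ b ∈ I, x b) ≤
      (∑ b ∈ I, x b) * Real.log I.card + ∑ b ∈ I, x b * Real.log (x b) := by
  rcases I.eq_empty_or_nonempty with rfl | hI
  · simp
  set s := ∑ b ∈ I, x b with hs
  have hspos : 0 < s := Finset.sum_pos hx hI
  have hm : (0 : ℝ) < I.card := by exact_mod_cast hI.card_pos
  -- The tangent line of `y ↦ y * log y` at the mean `s / #I`.
  have key : ∀ b ∈ I, x b * (Real.log s - Real.log I.card) + x b - s / I.card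
      ≤ x b * Real.log (x b) := by
    intro b hb
    have hb' := hx b hb
    have h := Real.log_le_sub_one_of_pos (x := s / I.card / x b) (by positivity)
    rw [Real.log_div (by positivity) hb'.ne', Real.log_div hspos.ne' hm.ne'] at h
    have h2 := mul_le_mul_of_nonneg_left h hb'.le
    have h3 : x b * (s / I.card / x b - 1) = s / I.card - x b := by field_simp
    rw [h3] at h2
    linarith
  have h := Finset.sum_le_sum key
  rw [Finset.sum_sub_distrib, Finset.sum_add_distrib, ← Finset.sum_mul, ← hs, Finset.sum_const,
    nsmul_eq_mul, mul_div_cancel₀ _ hm.ne'] at h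
  linarith

/-- The chain rule bound: if a member of `S` is determined by its values on `T`, then `log #S` is at
most the average over `X ∈ S` of the sum of the `log` of the numbers of values still possible at
each point, the points being revealed in decreasing order of `key`. -/
theorem entropy_chain {σ α β κ : Type*} [DecidableEq α] [DecidableEq β]
    [LinearOrder κ] (v : σ → α → β) (key : α → κ) (T : Finset α) :
    ∀ S : Finset σ, (∀ X ∈ S, ∀ Y ∈ S, (∀ t ∈ T, v X t = v Y t) → X = Y) →
      (S.card : ℝ) * Real.log S.card ≤
        ∑ X ∈ S, ∑ t ∈ T, Real.log ((histValues S v T key t X).card) := by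
  induction T using Finset.induction_on_max_value key with
  | empty =>
    intro S hS
    have : S.card ≤ 1 := Finset.card_le_one.2 fun X hX Y hY => hS X hX Y hY (by simp)
    interval_cases h : S.card <;> simp
  | insert a T haT hmax ih =>
    intro S hS
    -- The point `a` of largest key is revealed before all of `T`; its value partitions `S`.
    set I := S.image fun Y => v Y a with hI
    have hmaps : ∀ X ∈ S, v X a ∈ I := fun X hX => Finset.mem_image_of_mem _ hX
    have hNa : ∀ X ∈ S, (histValues S v (insert a T) key a X).card = I.card := by
      intro X _
      unfold histValues
      rw [Finset.filter_true_of_mem]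
      intro Y _ s hs hlt
      rcases Finset.mem_insert.1 hs with rfl | hs
      · exact absurd hlt (lt_irrefl _)
      · exact absurd (hmax s hs) (not_le.2 hlt)
    have hfib : ∀ b ∈ I, ((S.filter fun X => v X a = b).card : ℝ) *
        Real.log (S.filter fun X => v X a = b).card ≤
        ∑ X ∈ S.filter (fun X => v X a = b),
          ∑ t ∈ T, Real.log ((histValues S v (insert a T) key t X).card) := by
      intro b _
      refine (ih (S.filter fun X => v X a = b) ?_).trans ?_
      · intro X hX Y hY h
        rw [Finset.mem_filter] at hX hY
        refine hS X hX.1 Y hY.1 fun t ht => ?_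
        rcases Finset.mem_insert.1 ht with rfl | ht
        · rw [hX.2, hY.2]
        · exact h t ht
      · refine Finset.sum_le_sum fun X hX => Finset.sum_le_sum fun t _ => ?_
        refine Real.log_le_log ?_ ?_
        · exact Nat.cast_pos.2 (card_histValues_pos v T key t hX)
        · refine Nat.cast_le.2 (Finset.card_le_card (Finset.image_subset_image ?_))
          intro Y hY
          simp only [Finset.mem_filter] at hY hX ⊢
          refine ⟨hY.1.1, fun s hs hlt => ?_⟩
          rcases Finset.mem_insert.1 hs with rfl | hs
          · rw [hY.1.2, hX.2]
          · exact hY.2 s hs hlt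
    have hcard : (S.card : ℝ) = ∑ b ∈ I, ((S.filter fun X => v X a = b).card : ℝ) := by
      exact_mod_cast Finset.card_eq_sum_card_fiberwise hmaps
    have hlog := sum_mul_log_le I (fun b => ((S.filter fun X => v X a = b).card : ℝ)) (by
      intro b hb
      obtain ⟨X, hX, rfl⟩ := Finset.mem_image.1 hb
      exact Nat.cast_pos.2 (Finset.card_pos.2 ⟨X, Finset.mem_filter.2 ⟨hX, rfl⟩⟩))
    rw [← hcard] at hlog
    refine hlog.trans ?_
    simp_rw [Finset.sum_insert haT]
    rw [Finset.sum_add_distrib, ← Finset.sum_fiberwise_of_maps_to hmaps (fun X =>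
      ∑ t ∈ T, Real.log ((histValues S v (insert a T) key t X).card))]
    refine add_le_add (le_of_eq ?_) (Finset.sum_le_sum hfib)
    rw [Finset.sum_congr rfl fun X hX => by rw [hNa X hX], Finset.sum_const, nsmul_eq_mul]

/-! ### Riemann sums and random labellings -/

/-- Some right-endpoint Riemann sum of a continuous `g` with primitive `G` exceeds `G 1 - G 0` by at
most `η`. -/
theorem riemann_sum_le (G g : ℝ → ℝ) (hG : ContinuousOn G (Set.Icc 0 1))
    (hg : ContinuousOn g (Set.Icc 0 1)) (hd : ∀ x ∈ Set.Ioo (0 : ℝ) 1, HasDerivAt G (g x) x)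
    (η : ℝ) (hη : 0 < η) :
    ∃ M : ℕ, 0 < M ∧
      ∑ k ∈ Finset.range M, (1 / (M : ℝ)) * g ((k + 1 : ℝ) / M) ≤ G 1 - G 0 + η := by
  have huc := isCompact_Icc.uniformContinuousOn_of_continuous hg
  obtain ⟨d, hd0, hdd⟩ := Metric.uniformContinuousOn_iff.1 huc η hη
  obtain ⟨m, hm⟩ := exists_nat_gt (1 / d)
  have hm0 : (0 : ℝ) < m := lt_trans (by positivity) hm
  have hmd : 1 / (m : ℝ) < d := by
    rw [div_lt_iff₀ hm0]; rw [div_lt_iff₀ hd0] at hm; linarith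
  refine ⟨m, by exact_mod_cast hm0, ?_⟩
  have key : ∀ k ∈ Finset.range m, (1 / (m : ℝ)) * g ((k + 1 : ℝ) / m) ≤
      (G (((k + 1 : ℕ) : ℝ) / m) - G ((k : ℝ) / m)) + η / m := by
    intro k hk
    have hkm : ((k : ℝ) + 1) ≤ m := by exact_mod_cast Finset.mem_range.1 hk
    have h0 : (0 : ℝ) ≤ k / m := by positivity
    have h1 : ((k : ℝ) + 1) / m ≤ 1 := by rw [div_le_one hm0]; exact hkm
    have hlt : (k : ℝ) / m < (k + 1) / m := by gcongr; linarith
    obtain ⟨c, hc, hce⟩ := exists_hasDerivAt_eq_slope G g hlt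
      (hG.mono (Set.Icc_subset_Icc h0 h1)) fun x hx => hd x ⟨h0.trans_lt hx.1, hx.2.trans_le h1⟩
    have hw : ((k : ℝ) + 1) / m - k / m = 1 / m := by ring
    rw [hw, eq_div_iff (by positivity)] at hce
    have hclose := hdd ((k + 1) / m) ⟨h0.trans hlt.le, h1⟩ c
      ⟨h0.trans hc.1.le, hc.2.le.trans h1⟩ (by
        rw [Real.dist_eq, abs_of_pos (by linarith [hc.2])]; linarith [hc.1])
    rw [Real.dist_eq] at hclose
    have := (abs_lt.1 hclose).2
    push_cast
    rw [← hce]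
    have h3 : (1 / (m : ℝ)) * (g ((k + 1) / m) - g c) ≤ (1 / m) * η := by gcongr
    have h4 : (1 / (m : ℝ)) * η = η / m := by ring
    linarith
  refine (Finset.sum_le_sum key).trans ?_
  rw [Finset.sum_add_distrib, Finset.sum_range_sub (fun k : ℕ => G ((k : ℝ) / m))]
  simp
  rw [div_self hm0.ne', mul_div_cancel₀ _ hm0.ne']

/-- A uniformly random labelling by `Fin M` gives `t` the label `k` and every point of `D ∋ t` a
label at most `k` with probability `(1 / M) * ((k + 1) / M) ^ (#D - 1)`. -/
theorem weight_card {α : Type*} [Fintype α] [DecidableEq α] (M : ℕ) (hM : 0 < M) (k : Fin M)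
    (t : α) (D : Finset α) (ht : t ∈ D) :
    ((Finset.univ.filter fun l : α → Fin M => l t = k ∧ ∀ s ∈ D, l s ≤ k).card : ℝ) =
      (M : ℝ) ^ Fintype.card α * ((1 / M) * (((k : ℕ) + 1 : ℝ) / M) ^ (D.card - 1)) := by
  have hset : (Finset.univ.filter fun l : α → Fin M => l t = k ∧ ∀ s ∈ D, l s ≤ k) =
      Fintype.piFinset fun s => if s = t then {k} else if s ∈ D then Finset.Iic k
        else Finset.univ := by
    ext l
    simp only [Finset.mem_filter, Finset.mem_univ, true_and, Fintype.mem_piFinset]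
    constructor
    · rintro ⟨h1, h2⟩ s
      split_ifs with hs hsD
      · subst hs; simp [h1]
      · simpa using h2 s hsD
      · simp
    · intro h
      have h1 : l t = k := by simpa using h t
      refine ⟨h1, fun s hs => ?_⟩
      by_cases hst : s = t
      · subst hst; exact h1.le
      · simpa [hst, hs] using h s
  have hM' : (M : ℝ) ≠ 0 := by positivity
  rw [hset, Fintype.card_piFinset]
  push_cast
  have hterm : ∀ s : α, ((if s = t then {k} else if s ∈ D then Finset.Iic k
        else Finset.univ : Finset (Fin M)).card : ℝ) =
      M * ((if s = t then 1 / (M : ℝ) else 1) *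
        (if s ∈ D.erase t then ((k : ℕ) + 1 : ℝ) / M else 1)) := by
    intro s
    by_cases hst : s = t
    · simp [hst, hM']
    · by_cases hs : s ∈ D
      · simp [hst, hs]; field_simp
      · simp [hst, hs]
  rw [Finset.prod_congr rfl fun s _ => hterm s, Finset.prod_mul_distrib, Finset.prod_mul_distrib,
    Finset.prod_ite_eq' , Finset.prod_ite_mem, Finset.univ_inter, Finset.prod_const,
    Finset.prod_const, Finset.card_erase_of_mem ht]
  simp

/-! ### Blocks of a Steiner system -/

/-- The block of `X` containing `t`, encoded as the union of all members of `X` containing `t`;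
for a Steiner system and an `r`-set `t` there is exactly one such member. -/
def block {n : ℕ} (X : Finset (Finset (Fin n))) (t : Finset (Fin n)) : Finset (Fin n) :=
  (X.filter fun e => t ⊆ e).sup id

section Steiner

variable {n q r : ℕ} {X : Finset (Finset (Fin n))}

theorem block_eq (hX : IsSteinerSystem n q r X) {t e : Finset (Fin n)} (ht : t.card = r)
    (he : e ∈ X) (hte : t ⊆ e) : block X t = e := by
  have : X.filter (fun e => t ⊆ e) = {e} := by
    ext f
    simp only [Finset.mem_filter, Finset.mem_singleton]
    exact ⟨fun h => (hX.2 t ht).unique h ⟨he, hte⟩, fun h => h ▸ ⟨he, hte⟩⟩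
  simp [block, this]

theorem block_mem (hX : IsSteinerSystem n q r X) {t : Finset (Fin n)} (ht : t.card = r) :
    block X t ∈ X ∧ t ⊆ block X t := by
  obtain ⟨e, ⟨he, hte⟩, -⟩ := hX.2 t ht
  rw [block_eq hX ht he hte]
  exact ⟨he, hte⟩

theorem eq_of_block_eq (hr : r < q) {Y : Finset (Finset (Fin n))} (hX : IsSteinerSystem n q r X)
    (hY : IsSteinerSystem n q r Y)
    (h : ∀ t ∈ (Finset.univ : Finset (Fin n)).powersetCard r, block X t = block Y t) : X = Y := by
  have main : ∀ X Y : Finset (Finset (Fin n)), IsSteinerSystem n q r X →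
      IsSteinerSystem n q r Y →
      (∀ t ∈ (Finset.univ : Finset (Fin n)).powersetCard r, block X t = block Y t) → X ⊆ Y := by
    intro X Y hX hY h e he
    obtain ⟨t, hte, ht⟩ := Finset.exists_subset_card_eq (s := e) (n := r) (by
      rw [hX.1 e he]; exact hr.le)
    rw [← block_eq hX ht he hte, h t (by simp [ht])]
    exact (block_mem hY ht).1
  exact (main X Y hX hY h).antisymm (main Y X hY hX fun t ht => (h t ht).symm)

/-- The `r`-sets contained in a block of `X` which has an `r`-subset in common with `f`. -/
def shadow (r : ℕ) (X : Finset (Finset (Fin n))) (f : Finset (Fin n)) :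
    Finset (Finset (Fin n)) :=
  (f.powersetCard r).biUnion fun u => (block X u).powersetCard r

/-- If an `r`-subset of the block of `t` has a higher label, the block of `t` is already known. -/
theorem card_histValues_le_one {M : ℕ} {S : Finset (Finset (Finset (Fin n)))}
    (hS : ∀ Y ∈ S, IsSteinerSystem n q r Y) (hXS : X ∈ S) (l : Finset (Fin n) → Fin M)
    {t : Finset (Fin n)} (ht : t.card = r)
    (h : ¬ ∀ s ∈ (block X t).powersetCard r, l s ≤ l t) :
    (histValues S block ((Finset.univ : Finset (Fin n)).powersetCard r) l t X).card ≤ 1 := by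
  push Not at h
  obtain ⟨s, hs, hlt⟩ := h
  rw [Finset.mem_powersetCard] at hs
  have hX := hS X hXS
  have hb := block_mem hX ht
  have hsb := block_eq hX hs.2 hb.1 hs.1
  refine Finset.card_le_one_iff_subset_singleton.2 ⟨block X t, fun f hf => ?_⟩
  obtain ⟨Y, hYS', hY, rfl⟩ := mem_histValues.1 hf
  have hYS := hS Y hYS'
  have h1 := hY s (by simp [hs.2]) hlt
  rw [hsb] at h1
  rw [Finset.mem_singleton]
  exact block_eq hYS ht (h1 ▸ (block_mem hYS hs.2).1) hb.2

/-- If no `r`-subset of the block of `t` has a higher label, a `q`-set `f` can be the block of `t`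
only when no label in its shadow is higher: a revealed block meeting `f` in an `r`-set would have
to equal `f`, hence contain `t`. -/
theorem card_histValues_le_card {M : ℕ} {S : Finset (Finset (Finset (Fin n)))}
    (hS : ∀ Y ∈ S, IsSteinerSystem n q r Y) (hXS : X ∈ S) (l : Finset (Fin n) → Fin M)
    {t : Finset (Fin n)} (ht : t.card = r)
    (h : ∀ s ∈ (block X t).powersetCard r, l s ≤ l t) :
    (histValues S block ((Finset.univ : Finset (Fin n)).powersetCard r) l t X).card ≤
      ((((Finset.univ : Finset (Fin n)).powersetCard q).filter fun f => t ⊆ f).filter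
        fun f => ∀ s ∈ shadow r X f, l s ≤ l t).card := by
  have hX := hS X hXS
  refine Finset.card_le_card fun f hf => ?_
  obtain ⟨Y, hYS', hY, rfl⟩ := mem_histValues.1 hf
  have hYS := hS Y hYS'
  have hf := block_mem hYS ht
  simp only [Finset.mem_filter, Finset.mem_powersetCard, Finset.subset_univ, true_and]
  refine ⟨⟨hYS.1 _ hf.1, hf.2⟩, fun s hs => ?_⟩
  by_contra hlt
  rw [not_le] at hlt
  obtain ⟨u, hu, hs⟩ := Finset.mem_biUnion.1 hs
  rw [Finset.mem_powersetCard] at hu hs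
  have hb := block_mem hX hu.2
  have h1 := hY s (by simp [hs.2]) hlt
  rw [block_eq hX hs.2 hb.1 hs.1] at h1
  have h2 : block X u ∈ Y := h1 ▸ (block_mem hYS hs.2).1
  have h3 : block Y t = block X u :=
    (block_eq hYS hu.2 hf.1 hu.1).symm.trans (block_eq hYS hu.2 h2 hb.2)
  have h4 : block X t = block X u := block_eq hX ht hb.1 (h3 ▸ hf.2)
  exact absurd (h s (by rw [Finset.mem_powersetCard, h4]; exact hs)) (not_le.2 hlt)

theorem card_shadow (hX : IsSteinerSystem n q r X) {f : Finset (Fin n)} (hf : f.card = q)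
    (hinj : Set.InjOn (block X) (f.powersetCard r : Set (Finset (Fin n)))) :
    (shadow r X f).card = q.choose r * q.choose r := by
  unfold shadow
  rw [Finset.card_biUnion]
  · rw [Finset.sum_congr rfl fun u hu => by
      rw [Finset.card_powersetCard, hX.1 _ (block_mem hX (Finset.mem_powersetCard.1 hu).2).1],
      Finset.sum_const, Finset.card_powersetCard, hf, smul_eq_mul]
  · intro u hu w hw huw
    refine Finset.disjoint_left.2 ?_
    intro s hs hs'
    rw [Finset.mem_powersetCard] at hs hs'
    refine huw (hinj hu hw ?_)
    rw [← block_eq hX hs.2 (block_mem hX (Finset.mem_powersetCard.1 hu).2).1 hs.1,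
      ← block_eq hX hs.2 (block_mem hX (Finset.mem_powersetCard.1 hw).2).1 hs'.1]

theorem card_supersets {t : Finset (Fin n)} (ht : t.card = r) :
    (((Finset.univ : Finset (Fin n)).powersetCard q).filter fun f => t ⊆ f).card ≤
      n.choose (q - r) := by
  have : (((Finset.univ : Finset (Fin n)).powersetCard (q - r))).card = n.choose (q - r) := by
    simp
  rw [← this]
  refine Finset.card_le_card_of_injOn (fun f => f \ t) ?_ ?_
  · intro f hf
    simp only [Finset.coe_filter, Finset.mem_powersetCard, Set.mem_ofPred_eq, Finset.subset_univ,
      true_and, Finset.mem_coe] at hf ⊢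
    rw [Finset.card_sdiff_of_subset hf.2, hf.1, ht]
  · intro f hf g hg h
    simp only [Finset.coe_filter, Finset.mem_powersetCard, Set.mem_ofPred_eq, Finset.subset_univ,
      true_and] at hf hg h
    rw [← Finset.sdiff_union_of_subset hf.2, ← Finset.sdiff_union_of_subset hg.2, h]

open Classical in
/-- Few `q`-sets `f ⊇ t` have two `r`-subsets in a common block `B`: then `f ∩ B` has more than `r`
points, so it has a point `x ∉ t`, and `x` is one of the `q` points of the block of an `r`-subset
of `f.erase x`. -/
theorem card_bad (hrq : r < q) (hX : IsSteinerSystem n q r X) {t : Finset (Fin n)}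
    (ht : t.card = r) :
    ((((Finset.univ : Finset (Fin n)).powersetCard q).filter fun f => t ⊆ f).filter fun f =>
      ¬ Set.InjOn (block X) (f.powersetCard r : Set (Finset (Fin n)))).card ≤
      n.choose (q - r - 1) * (q.choose r * q) := by
  have hsub : ((((Finset.univ : Finset (Fin n)).powersetCard q).filter fun f => t ⊆ f).filter
      fun f => ¬ Set.InjOn (block X) (f.powersetCard r : Set (Finset (Fin n)))) ⊆
      ((Finset.univ : Finset (Fin n)).powersetCard (q - r - 1)).biUnion fun h =>
        ((t ∪ h).powersetCard r).biUnion fun s => (block X s).image fun x =>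
          insert x (t ∪ h) := by
    intro f hf
    simp only [Finset.mem_filter, Finset.mem_powersetCard, Finset.subset_univ, true_and,
      Set.InjOn, Finset.mem_coe] at hf
    obtain ⟨⟨hfq, htf⟩, hninj⟩ := hf
    push Not at hninj
    obtain ⟨u, hu, w, hw, hB, huw⟩ := hninj
    have hbu := block_mem hX hu.2
    have hbw := block_mem hX hw.2
    rw [← hB] at hbw
    have hcard : r < (u ∪ w).card := by
      by_contra hle
      rw [not_lt] at hle
      have h1 := Finset.eq_of_subset_of_card_le (Finset.subset_union_left (s₁ := u) (s₂ := w))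
        (by omega)
      have h2 := Finset.eq_of_subset_of_card_le (Finset.subset_union_right (s₁ := u) (s₂ := w))
        (by omega)
      exact huw (h1.trans h2.symm)
    obtain ⟨x, hx, hxt⟩ := Finset.exists_mem_notMem_of_card_lt_card (s := t) (t := u ∪ w)
      (by omega)
    obtain ⟨s, hs, hsr⟩ := Finset.exists_subset_card_eq (s := (u ∪ w).erase x) (n := r) (by
      rw [Finset.card_erase_of_mem hx]; omega)
    have huwf : u ∪ w ⊆ f := Finset.union_subset hu.1 hw.1
    have huwB : u ∪ w ⊆ block X u := Finset.union_subset hbu.2 hbw.2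
    have htfx : t ⊆ f.erase x := Finset.subset_erase.2 ⟨htf, hxt⟩
    have hun : t ∪ (f.erase x \ t) = f.erase x := Finset.union_sdiff_of_subset htfx
    have hsB : block X s = block X u :=
      block_eq hX hsr hbu.1 ((hs.trans (Finset.erase_subset _ _)).trans huwB)
    simp only [Finset.mem_biUnion, Finset.mem_image, Finset.mem_powersetCard, Finset.subset_univ,
      true_and]
    refine ⟨f.erase x \ t, ?_, s, ⟨?_, hsr⟩, x, ?_, ?_⟩
    · rw [Finset.card_sdiff_of_subset htfx, Finset.card_erase_of_mem (huwf hx), hfq, ht]; omega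
    · rw [hun]; exact hs.trans (Finset.erase_subset_erase _ huwf)
    · rw [hsB]; exact huwB hx
    · rw [hun]; exact Finset.insert_erase (huwf hx)
  refine (Finset.card_le_card hsub).trans ?_
  refine (Finset.card_biUnion_le_card_mul _ _ (q.choose r * q) fun h hh => ?_).trans (by simp)
  have hhc := (Finset.mem_powersetCard.1 hh).2
  refine (Finset.card_biUnion_le_card_mul _ _ q fun s hs => ?_).trans ?_
  · refine Finset.card_image_le.trans (le_of_eq ?_)
    exact hX.1 _ (block_mem hX (Finset.mem_powersetCard.1 hs).2).1
  · rw [Finset.card_powersetCard]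
    refine Nat.mul_le_mul_right _ (Nat.choose_le_choose _ ?_)
    exact (Finset.card_union_le _ _).trans (by omega)

/-! ### Averaging over labellings -/

/-- The total over all labellings of the entropy contribution of `t`, for one fixed system `X`. -/
theorem sum_log_card_histValues_le (hrq : r < q) {S : Finset (Finset (Finset (Fin n)))}
    (hS : ∀ Y ∈ S, IsSteinerSystem n q r Y) (hXS : X ∈ S) {t : Finset (Fin n)} (ht : t.card = r)
    {M : ℕ} (hM : 0 < M) {δ : ℝ} (hδ : 0 < δ) (hC : 0 < n.choose (q - r))
    (hbad : ((n.choose (q - r - 1) * (q.choose r * q) : ℕ) : ℝ) ≤ δ * n.choose (q - r)) :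
    ∑ l : Finset (Fin n) → Fin M, Real.log (histValues S block
        ((Finset.univ : Finset (Fin n)).powersetCard r) l t X).card ≤
      (M : ℝ) ^ Fintype.card (Finset (Fin n)) * ∑ k : Fin M,
        (1 / M) * (((k : ℕ) + 1 : ℝ) / M) ^ (q.choose r - 1) *
          Real.log (n.choose (q - r) *
            ((((k : ℕ) + 1 : ℝ) / M) ^ (q.choose r * q.choose r - q.choose r) + δ)) := by
  classical
  have hX := hS X hXS
  have hbt := block_mem hX ht
  set Q := q.choose r with hQ
  have hQ0 : 0 < Q := Nat.choose_pos hrq.le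
  have hPcard : ((block X t).powersetCard r).card = Q := by
    rw [Finset.card_powersetCard, hX.1 _ hbt.1]
  have htP : t ∈ (block X t).powersetCard r := Finset.mem_powersetCard.2 ⟨hbt.2, ht⟩
  set C : ℝ := (n.choose (q - r) : ℝ) with hCdef
  have hC' : 0 < C := Nat.cast_pos.2 hC
  set A : ℝ := (M : ℝ) ^ Fintype.card (Finset (Fin n)) with hA
  have hA0 : 0 < A := by positivity
  rw [← Finset.sum_fiberwise (s := Finset.univ) (g := fun l : Finset (Fin n) → Fin M => l t),
    Finset.mul_sum]
  refine Finset.sum_le_sum fun k _ => ?_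
  set x : ℝ := ((k : ℕ) + 1 : ℝ) / M with hx
  have hx0 : 0 < x := by positivity
  have hx1 : x ≤ 1 := by
    rw [hx, div_le_one (by positivity)]; exact_mod_cast k.2
  set c : ℝ := C * (x ^ (Q * Q - Q) + δ) with hc
  have hc0 : 0 < c := by positivity
  set F := (((Finset.univ : Finset (Fin n)).powersetCard q).filter fun f => t ⊆ f) with hF
  set E : Finset (Finset (Fin n)) → Finset (Finset (Fin n) → Fin M) := fun D =>
    Finset.univ.filter fun l => l t = k ∧ ∀ s ∈ D, l s ≤ k with hE
  set p : ℝ := A * ((1 / M) * x ^ (Q - 1)) with hp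
  have hEp : ((E ((block X t).powersetCard r)).card : ℝ) = p := by
    rw [hE]; simp only []
    rw [weight_card M hM k t _ htP, hPcard]
  -- Labellings outside the event of `hEp` contribute at most `log 1`; on it, `log` is bounded by
  -- its tangent line at `c`, which leaves an expression linear in the number of candidates.
  have step1 : ∑ l ∈ Finset.univ.filter (fun l : Finset (Fin n) → Fin M => l t = k),
      Real.log ((histValues S block ((Finset.univ : Finset (Fin n)).powersetCard r) l t X).card) ≤
      ∑ l ∈ E ((block X t).powersetCard r), (Real.log c - 1 +
        (∑ f ∈ F, if l ∈ E (shadow r X f) then (1 : ℝ) else 0) / c) := by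
    have hsub : E ((block X t).powersetCard r) ⊆
        Finset.univ.filter (fun l : Finset (Fin n) → Fin M => l t = k) := by
      intro l hl
      simp only [hE, Finset.mem_filter, Finset.mem_univ, true_and] at hl ⊢
      exact hl.1
    rw [← Finset.sum_sdiff hsub]
    have hneg : ∑ l ∈ Finset.univ.filter (fun l : Finset (Fin n) → Fin M => l t = k) \
        E ((block X t).powersetCard r),
        Real.log ((histValues S block ((Finset.univ : Finset (Fin n)).powersetCard r) l t X).card) ≤
          0 := by
      refine Finset.sum_nonpos fun l hl => ?_
      simp only [hE, Finset.mem_sdiff, Finset.mem_filter, Finset.mem_univ, true_and,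
        not_and] at hl
      refine Real.log_nonpos (Nat.cast_nonneg _) ?_
      have := card_histValues_le_one hS hXS l ht (by rw [hl.1]; exact hl.2 hl.1)
      exact_mod_cast this
    refine (add_le_of_nonpos_left hneg).trans (Finset.sum_le_sum fun l hl => ?_)
    simp only [hE, Finset.mem_filter, Finset.mem_univ, true_and] at hl
    have h1 := card_histValues_le_card hS hXS l ht (by rw [hl.1]; exact hl.2)
    set N := (histValues S block ((Finset.univ : Finset (Fin n)).powersetCard r) l t X).card with hN
    have hNpos : (0 : ℝ) < N := Nat.cast_pos.2 (card_histValues_pos _ _ l t hXS)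
    have h2 : (N : ℝ) ≤ ∑ f ∈ F, if l ∈ E (shadow r X f) then (1 : ℝ) else 0 := by
      rw [Finset.sum_boole]
      refine Nat.cast_le.2 (h1.trans (Finset.card_le_card ?_))
      intro f hf
      rw [Finset.mem_filter] at hf ⊢
      refine ⟨hf.1, ?_⟩
      simp only [hE, Finset.mem_filter, Finset.mem_univ, true_and]
      refine ⟨hl.1, ?_⟩
      rw [← hl.1]; exact hf.2
    have h3 := Real.log_le_sub_one_of_pos (x := N / c) (by positivity)
    rw [Real.log_div hNpos.ne' hc0.ne'] at h3
    have h4 : (N : ℝ) / c ≤ (∑ f ∈ F, if l ∈ E (shadow r X f) then (1 : ℝ) else 0) / c := by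
      gcongr
    linarith
  refine step1.trans ?_
  -- A bad `f` is counted at most on the whole event, of measure `p`; a good one with measure
  -- `p * x ^ (Q * Q - Q)`.
  have step2 : ∑ l ∈ E ((block X t).powersetCard r),
      (∑ f ∈ F, if l ∈ E (shadow r X f) then (1 : ℝ) else 0) ≤ p * c := by
    rw [Finset.sum_comm]
    have hterm : ∀ f ∈ F, (∑ l ∈ E ((block X t).powersetCard r),
        if l ∈ E (shadow r X f) then (1 : ℝ) else 0) ≤
        p * x ^ (Q * Q - Q) +
          if ¬ Set.InjOn (block X) (f.powersetCard r : Set (Finset (Fin n))) then p else 0 := by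
      intro f hf
      simp only [hF, Finset.mem_filter, Finset.mem_powersetCard, Finset.subset_univ,
        true_and] at hf
      rw [Finset.sum_boole]
      by_cases hinj : ¬ Set.InjOn (block X) (f.powersetCard r : Set (Finset (Fin n)))
      · rw [if_pos hinj]
        have h1 : (((E ((block X t).powersetCard r)).filter
            fun l => l ∈ E (shadow r X f)).card : ℝ) ≤ p := by
          rw [← hEp]
          exact Nat.cast_le.2 (Finset.card_filter_le _ _)
        have : 0 ≤ p * x ^ (Q * Q - Q) := by positivity
        linarith
      · rw [if_neg hinj]
        rw [not_not] at hinj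
        have htsh : t ∈ shadow r X f := Finset.mem_biUnion.2
          ⟨t, Finset.mem_powersetCard.2 ⟨hf.2, ht⟩, htP⟩
        have h1 : (((E ((block X t).powersetCard r)).filter
            fun l => l ∈ E (shadow r X f)).card : ℝ) ≤ (E (shadow r X f)).card := by
          refine Nat.cast_le.2 (Finset.card_le_card fun l hl => (Finset.mem_filter.1 hl).2)
        rw [add_zero]
        refine h1.trans (le_of_eq ?_)
        rw [hE]; simp only []
        rw [weight_card M hM k t _ htsh, card_shadow hX hf.1 hinj, hp, ← hx, ← hQ, mul_assoc,
          mul_assoc, ← pow_add]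
        congr 3
        have : Q ≤ Q * Q := Nat.le_mul_of_pos_left _ hQ0
        omega
    refine (Finset.sum_le_sum hterm).trans ?_
    rw [Finset.sum_add_distrib, Finset.sum_const, nsmul_eq_mul, ← Finset.sum_filter,
      Finset.sum_const, nsmul_eq_mul]
    have h1 : (F.card : ℝ) ≤ C := Nat.cast_le.2 (card_supersets ht)
    have h2 : ((F.filter fun f =>
      ¬ Set.InjOn (block X) (f.powersetCard r : Set (Finset (Fin n)))).card : ℝ) ≤ δ * C := by
      refine le_trans ?_ hbad
      exact Nat.cast_le.2 (card_bad hrq hX ht)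
    have hp0 : 0 ≤ p := by positivity
    calc _ ≤ C * (p * x ^ (Q * Q - Q)) + δ * C * p := by gcongr
      _ = p * c := by rw [hc]; ring
  rw [Finset.sum_add_distrib, Finset.sum_const, nsmul_eq_mul, hEp, ← Finset.sum_div]
  have h5 : (∑ l ∈ E ((block X t).powersetCard r),
      (∑ f ∈ F, if l ∈ E (shadow r X f) then (1 : ℝ) else 0)) / c ≤ p := by
    rw [div_le_iff₀ hc0]; exact step2
  have h6 : A * (1 / (M : ℝ) * x ^ (Q - 1) * Real.log c) = p * Real.log c := by rw [hp]; ring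
  rw [h6]
  linarith

end Steiner

/-! ### Asymptotics -/

/-- Adding `δ` inside the logarithm costs at most `η`, uniformly on `(0, 1]`. -/
theorem exists_smoothing (m a : ℕ) (hm : 1 ≤ m) (ha : 1 ≤ a) (η : ℝ) (hη : 0 < η) :
    ∃ δ : ℝ, 0 < δ ∧ ∀ x : ℝ, 0 < x → x ≤ 1 →
      x ^ m * Real.log (x ^ a + δ) ≤ x ^ m * (a * Real.log x) + η := by
  have ha' : (0 : ℝ) < a := by exact_mod_cast ha
  obtain ⟨ρ₀, hρ₀, hρ⟩ := Metric.continuousAt_iff.1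
    (Real.continuous_mul_log.continuousAt (x := 0)) (η / a) (by positivity)
  set ρ := min ρ₀ (1 / 2) with hρdef
  have hρpos : 0 < ρ := lt_min hρ₀ (by norm_num)
  refine ⟨min (1 / 2) (η * ρ ^ a), lt_min (by norm_num) (by positivity), fun x hx0 hx1 => ?_⟩
  have hδpos : 0 < min (1 / 2) (η * ρ ^ a) := lt_min (by norm_num) (by positivity)
  have hδ1 : min (1 / 2) (η * ρ ^ a) ≤ 1 / 2 := min_le_left _ _
  have hδ2 : min (1 / 2) (η * ρ ^ a) ≤ η * ρ ^ a := min_le_right _ _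
  set δ := min (1 / 2) (η * ρ ^ a)
  have hxm : 0 < x ^ m := by positivity
  have hxa : 0 < x ^ a := by positivity
  have hxm1 : x ^ m ≤ 1 := pow_le_one₀ hx0.le hx1
  -- Near `0` the left side is nonpositive and `x ^ m * log x` is small; away from `0`, `δ` is small
  -- relative to `x ^ a`.
  rcases lt_or_ge x ρ with hlt | hge
  · have h1 : x ^ a ≤ x := pow_le_of_le_one hx0.le hx1 (by omega)
    have h2 : x ≤ 1 / 2 := hlt.le.trans (min_le_right _ _)
    have h3 : Real.log (x ^ a + δ) ≤ 0 := Real.log_nonpos (by positivity) (by linarith)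
    have h4 := hρ (x := x) (by
      rw [Real.dist_eq, sub_zero, abs_of_pos hx0]; exact hlt.trans_le (min_le_left _ _))
    rw [Real.dist_eq] at h4
    simp only [zero_mul, sub_zero] at h4
    have h5 := (abs_lt.1 h4).1
    have h6 : x ^ m ≤ x := pow_le_of_le_one hx0.le hx1 (by omega)
    have h7 : Real.log x ≤ 0 := Real.log_nonpos hx0.le hx1
    have h8 : x * Real.log x ≤ x ^ m * Real.log x := mul_le_mul_of_nonpos_right h6 h7
    have h9 : a * (-(η / a)) ≤ a * (x ^ m * Real.log x) := by gcongr; linarith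
    have h10 : (a : ℝ) * (-(η / a)) = -η := by field_simp
    have h11 : x ^ m * Real.log (x ^ a + δ) ≤ 0 := mul_nonpos_of_nonneg_of_nonpos hxm.le h3
    linarith
  · have h1 : Real.log ((x ^ a + δ) / x ^ a) ≤ (x ^ a + δ) / x ^ a - 1 :=
      Real.log_le_sub_one_of_pos (by positivity)
    rw [Real.log_div (by positivity) hxa.ne', Real.log_pow] at h1
    have h2 : (x ^ a + δ) / x ^ a - 1 = δ / x ^ a := by field_simp; ring
    have h3 : δ / x ^ a ≤ η := by
      rw [div_le_iff₀ hxa]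
      refine hδ2.trans ?_
      gcongr
    have h4 : x ^ m * Real.log (x ^ a + δ) ≤ x ^ m * (a * Real.log x + η) := by
      gcongr; linarith
    have h5 : x ^ m * η ≤ 1 * η := by gcongr
    linarith

/-- With `Q = j + 2`, a Riemann sum for `∫ x in 0..1, x ^ (Q - 1) * (L + (Q * Q - Q) * log x)`, which
equals `(L - (Q - 1)) / Q`, with the smoothing error `η` included in the integrand. -/
theorem exists_mesh (j : ℕ) (L η : ℝ) (hη : 0 < η) :
    ∃ M : ℕ, 0 < M ∧
      ∑ k ∈ Finset.range M, (1 / (M : ℝ)) * (((k + 1 : ℝ) / M) ^ (j + 1) * L +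
        ((k + 1 : ℝ) / M) ^ (j + 1) * (((j + 2) * (j + 1) : ℝ) * Real.log ((k + 1 : ℝ) / M)) + η) ≤
      (L - (j + 1)) / (j + 2) + 2 * η := by
  have hj : ((j : ℝ) + 2) ≠ 0 := by positivity
  have hlog := Real.continuous_mul_log
  obtain ⟨M, hM, h⟩ := riemann_sum_le
    (fun x => x ^ (j + 2) / (j + 2) * L + ((j + 2) * (j + 1)) *
      (x ^ (j + 1) * (x * Real.log x) / (j + 2) - x ^ (j + 2) / (j + 2) ^ 2) + η * x)
    (fun x => x ^ (j + 1) * L + ((j + 2) * (j + 1)) * (x ^ j * (x * Real.log x)) + η)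
    (by fun_prop) (by fun_prop) (fun x hx => by
      have hx0 : x ≠ 0 := hx.1.ne'
      have h1 := hasDerivAt_pow (j + 2) x
      have h2 := (hasDerivAt_pow (j + 1) x).mul ((hasDerivAt_id x).mul (Real.hasDerivAt_log hx0))
      have h3 := ((h1.div_const ((j : ℝ) + 2)).mul_const L).add
        (((h2.div_const ((j : ℝ) + 2)).sub
          (h1.div_const (((j : ℝ) + 2) ^ 2))).const_mul (((j : ℝ) + 2) * (j + 1)))
      have h4 := h3.add ((hasDerivAt_id x).const_mul η)
      refine h4.congr_deriv ?_
      simp only [id, Pi.mul_apply, Nat.add_sub_cancel, show j + 2 - 1 = j + 1 from rfl]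
      push_cast
      field_simp
      ring) η hη
  refine ⟨M, hM, ?_⟩
  -- The integrand was written with `x * log x`, which is continuous at `0`.
  refine le_trans (le_of_eq (Finset.sum_congr rfl fun k _ => ?_)) (h.trans (le_of_eq ?_))
  · ring
  · simp
    field_simp
    ring

/-- With `p = q - r`, the bound of `card_bad` is eventually at most a `δ` fraction of the bound of
`card_supersets`. -/
theorem eventually_bad_le (p K : ℕ) (hp : 1 ≤ p) (δ : ℝ) (hδ : 0 < δ) :
    ∃ N : ℕ, ∀ n : ℕ, N ≤ n → 0 < n.choose p ∧
      ((n.choose (p - 1) * K : ℕ) : ℝ) ≤ δ * n.choose p := by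
  obtain ⟨k, rfl⟩ : ∃ k, p = k + 1 := ⟨p - 1, by omega⟩
  obtain ⟨N, hN⟩ := exists_nat_gt (K * (k + 1) / δ)
  refine ⟨N + k + 1, fun n hn => ⟨Nat.choose_pos (by omega), ?_⟩⟩
  have h1 : ((n.choose (k + 1) : ℕ) : ℝ) * (k + 1) = n.choose k * ((n - k : ℕ) : ℝ) := by
    exact_mod_cast Nat.choose_succ_right_eq n k
  have h2 : (N : ℝ) ≤ ((n - k : ℕ) : ℝ) := by exact_mod_cast (by omega : N ≤ n - k)
  rw [div_lt_iff₀ hδ] at hN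
  have hk : (0 : ℝ) < k + 1 := by positivity
  rw [Nat.add_sub_cancel]
  push_cast
  refine le_of_mul_le_mul_right ?_ hk
  calc (n.choose k : ℝ) * K * (k + 1) = n.choose k * (K * (k + 1)) := by ring
    _ ≤ n.choose k * (((n - k : ℕ) : ℝ) * δ) := by
        exact mul_le_mul_of_nonneg_left (hN.le.trans (mul_le_mul_of_nonneg_right h2 hδ.le))
          (Nat.cast_nonneg _)
    _ = δ * (n.choose k * ((n - k : ℕ) : ℝ)) := by ring
    _ = δ * n.choose (k + 1) * (k + 1) := by rw [← h1]; ring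

/-- The entropy bound with `M` labels, valid for every `M`. -/
theorem log_card_le_s7 {n q r : ℕ} (hrq : r < q) (S : Finset (Finset (Finset (Fin n))))
    (hS : ∀ Y ∈ S, IsSteinerSystem n q r Y) (hne : S.Nonempty)
    {M : ℕ} (hM : 0 < M) {δ : ℝ} (hδ : 0 < δ) (hC : 0 < n.choose (q - r))
    (hbad : ((n.choose (q - r - 1) * (q.choose r * q) : ℕ) : ℝ) ≤ δ * n.choose (q - r)) :
    Real.log S.card ≤ n.choose r * ∑ k ∈ Finset.range M,
        (1 / (M : ℝ)) * ((k + 1 : ℝ) / M) ^ (q.choose r - 1) *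
          Real.log (n.choose (q - r) *
            (((k + 1 : ℝ) / M) ^ (q.choose r * q.choose r - q.choose r) + δ)) := by
  rw [← Fin.sum_univ_eq_sum_range (fun k : ℕ => (1 / (M : ℝ)) *
    ((k + 1 : ℝ) / M) ^ (q.choose r - 1) * Real.log (n.choose (q - r) *
            (((k + 1 : ℝ) / M) ^ (q.choose r * q.choose r - q.choose r) + δ)))]
  set R := ∑ k : Fin M, (1 / (M : ℝ)) *
    (((k : ℕ) + 1 : ℝ) / M) ^ (q.choose r - 1) * Real.log (n.choose (q - r) *
            ((((k : ℕ) + 1 : ℝ) / M) ^ (q.choose r * q.choose r - q.choose r) + δ)) with hR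
  set A : ℝ := (M : ℝ) ^ Fintype.card (Finset (Fin n)) with hA
  have hA0 : 0 < A := by positivity
  have hS0 : (0 : ℝ) < S.card := by exact_mod_cast hne.card_pos
  have hcardfun : ((Finset.univ : Finset (Finset (Fin n) → Fin M)).card : ℝ) = A := by
    rw [Finset.card_univ, Fintype.card_fun, Fintype.card_fin]; push_cast; rfl
  have h1 : ∑ l : Finset (Fin n) → Fin M, (S.card : ℝ) * Real.log S.card ≤
      ∑ l : Finset (Fin n) → Fin M, ∑ X ∈ S,
        ∑ t ∈ (Finset.univ : Finset (Fin n)).powersetCard r, Real.log (histValues S block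
          ((Finset.univ : Finset (Fin n)).powersetCard r) l t X).card :=
    Finset.sum_le_sum fun l _ => entropy_chain block l _ S fun X hX Y hY h =>
      eq_of_block_eq hrq (hS X hX) (hS Y hY) h
  rw [Finset.sum_const, nsmul_eq_mul, hcardfun, Finset.sum_comm] at h1
  have h2 : ∀ X ∈ S, ∑ l : Finset (Fin n) → Fin M,
        ∑ t ∈ (Finset.univ : Finset (Fin n)).powersetCard r, Real.log (histValues S block
          ((Finset.univ : Finset (Fin n)).powersetCard r) l t X).card ≤
      n.choose r * (A * R) := by
    intro X hX
    rw [Finset.sum_comm]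
    refine (Finset.sum_le_sum fun t ht => sum_log_card_histValues_le hrq hS hX
      (Finset.mem_powersetCard.1 ht).2 hM hδ hC hbad).trans (le_of_eq ?_)
    rw [Finset.sum_const, Finset.card_powersetCard, Finset.card_univ, Fintype.card_fin,
      nsmul_eq_mul]
  have h3 := h1.trans (Finset.sum_le_sum h2)
  rw [Finset.sum_const, nsmul_eq_mul] at h3
  refine le_of_mul_le_mul_left ?_ (mul_pos hA0 hS0)
  linarith

theorem steiner_systems_upper_bound :
    ∀ q r : ℕ, 1 ≤ r → r < q → ∀ ε : ℝ, 0 < ε → ∃ N : ℕ, ∀ n : ℕ, N ≤ n →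
      (Nat.card {S : Finset (Finset (Fin n)) // IsSteinerSystem n q r S} : ℝ) ≤
        ((1 + ε) * (n.choose (q - r)) / Real.exp ((q.choose r : ℝ) - 1)) ^
          ((n.choose r : ℝ) / (q.choose r : ℝ)) := by
  classical
  intro q r hr hrq ε hε
  obtain ⟨j, hj⟩ : ∃ j, q.choose r = j + 2 := by
    have h1 : 1 < q.choose r := by
      refine lt_of_lt_of_le ?_ (Nat.choose_le_choose r hrq)
      rw [Nat.choose_succ_self_right]; omega
    exact ⟨q.choose r - 2, by omega⟩
  have hQ : (q.choose r : ℝ) = j + 2 := by rw [hj]; push_cast; ring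
  have hL : 0 < Real.log (1 + ε) := Real.log_pos (by linarith)
  -- The smoothing and the mesh cost `η` each, and `2 * η * Q = log (1 + ε)`.
  set η := Real.log (1 + ε) / (2 * (j + 2)) with hη
  have hη0 : 0 < η := by positivity
  have hsq : (j + 2) * (j + 2) - (j + 2) = (j + 2) * (j + 1) := by
    rw [Nat.sub_eq_iff_eq_add (Nat.le_mul_of_pos_left _ (by omega))]; ring
  obtain ⟨δ, hδ, hsm⟩ := exists_smoothing (j + 1) ((j + 2) * (j + 1)) (by omega)
    (Nat.mul_pos (by omega) (by omega)) η hη0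
  obtain ⟨N, hN⟩ := eventually_bad_le (q - r) (q.choose r * q) (by omega) δ hδ
  refine ⟨N, fun n hn => ?_⟩
  obtain ⟨hC, hbad⟩ := hN n hn
  have hC' : (0 : ℝ) < n.choose (q - r) := Nat.cast_pos.2 hC
  set S := Finset.univ.filter fun S : Finset (Finset (Fin n)) => IsSteinerSystem n q r S with hSdef
  have hcard : Nat.card {S : Finset (Finset (Fin n)) // IsSteinerSystem n q r S} = S.card := by
    rw [Nat.card_eq_fintype_card, Fintype.card_subtype]
  rw [hcard]
  have hbase : 0 < (1 + ε) * (n.choose (q - r)) / Real.exp ((q.choose r : ℝ) - 1) := by positivity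
  rcases S.eq_empty_or_nonempty with hS | hS
  · rw [hS]; simp only [Finset.card_empty, Nat.cast_zero]; positivity
  have hS0 : (0 : ℝ) < S.card := by exact_mod_cast hS.card_pos
  rw [← Real.log_le_log_iff hS0 (by positivity), Real.log_rpow hbase,
    Real.log_div (by positivity) (by positivity), Real.log_mul (by positivity) hC'.ne',
    Real.log_exp]
  obtain ⟨M, hM, hmesh⟩ := exists_mesh j (Real.log (n.choose (q - r))) η hη0
  have hM' : (0 : ℝ) < M := by exact_mod_cast hM
  refine (log_card_le_s7 hrq S (fun Y hY => (Finset.mem_filter.1 hY).2) hS hM hδ hC hbad).trans ?_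
  rw [hj, hsq, show j + 2 - 1 = j + 1 from rfl]
  have hle : ∑ k ∈ Finset.range M,
        (1 / (M : ℝ)) * ((k + 1 : ℝ) / M) ^ (j + 1) * Real.log (n.choose (q - r) *
            (((k + 1 : ℝ) / M) ^ ((j + 2) * (j + 1)) + δ)) ≤
      (Real.log (n.choose (q - r)) - (j + 1)) / (j + 2) + 2 * η := by
    refine le_trans (Finset.sum_le_sum fun k hk => ?_) hmesh
    have hx0 : (0 : ℝ) < (k + 1 : ℝ) / M := by positivity
    have hx1 : (k + 1 : ℝ) / M ≤ 1 := by
      rw [div_le_one hM']; exact_mod_cast Finset.mem_range.1 hk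
    rw [mul_assoc, Real.log_mul hC'.ne' (by positivity)]
    have := hsm _ hx0 hx1
    push_cast at this
    refine mul_le_mul_of_nonneg_left ?_ (by positivity)
    linarith
  refine (mul_le_mul_of_nonneg_left hle (Nat.cast_nonneg _)).trans (le_of_eq ?_)
  rw [hη]
  push_cast
  field_simp
  ring
end

section
/- Fix integers q > r > r' ≥ 1. For every ε > 0 there exists N such that for every integer n ≥ N and every (n, q, r)-Steiner system S, the number of subcollections S' ⊆ S that are (n, q, r')-Steiner systems is at most ((1 + ε) · C(n, r−r') / e^(C(q,r') − 1))^(C(n,r') / C(q,r')), where C(a,b) denotes the binomial coefficient. -/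
/-!
The subsystems `S'` are perfect matchings of a hypergraph: its vertices are the `r'`-subsets of the
ground set, and each `e ∈ S` is an edge consisting of its `K = C(q, r')` subsets of size `r'`. This
hypergraph has degrees at most `A = C(n, r - r')` (`IsSteinerSystem.card_filter_superset_le`), and
the claim is the entropy-type bound `((1 + o(1)) A / e ^ (K - 1)) ^ (C(n, r') / K)` for its number of
perfect matchings (`card_isPM_le`).

Give every vertex a random label and build a matching by repeatedly taking the uncovered vertex of
largest label and choosing, uniformly, an available edge through it. For every labelling the
probabilities of the matchings sum to at most `1`; a matching `M` has probability at least
`∏ 1 / N_e`, where `N_e` is the number of choices available when `e ∈ M` is chosen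
(`sum_prod_inv_choices_le_one`). By Jensen's inequality it suffices to bound, for each fixed `M`, the
average of `∑ log N_e` over all labellings (`sum_labels_log_le`).

Suppose the edge `e` is reached at a vertex with label `y ∈ [0, 1]`. Any other edge `f` through this
vertex is available only if the other `K - 1` edges of `M` that meet `f` have no label exceeding `y`,
which has probability `y ^ (K (K - 1))`. So `log N_e` is on average about
`log A + K (K - 1) 𝔼 log y`, where `y` is the maximum of `K` uniform variables and
`𝔼 log y = -1 / K`; this gives `log A - (K - 1)` per edge. The heuristic fails only for the edges `f`
meeting some edge of `M` in two or more vertices. Such an `f` shares an `(r' + 1)`-set with a member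
of `M`, so there are only `O(|M| C(n, r - r' - 1)) = o(|M| A)` of them
(`IsSteinerSystem.card_bad_le`).

Labels are taken in `{1/T, …, T/T}` with `T` a large constant, so that all expectations are finite
sums; the discretisation costs `K ^ 3 / T` per edge.
-/

/-! ### Power sums and random labels -/

open Finset in
/-- The Riemann sum of `∫₀¹ y ^ (K - 1) dy = 1 / K` with `T` nodes overshoots by at most `1 / T`. -/
theorem sum_pow_upper (K T : ℕ) (hK : 1 ≤ K) (hT : 1 ≤ T) :
    ∑ k : Fin T, (1 / (T : ℝ)) * (((k : ℕ) + 1 : ℝ) / T) ^ (K - 1) ≤ 1 / K + 1 / T := by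
  obtain ⟨J, rfl⟩ : ∃ J, K = J + 1 := ⟨K - 1, by omega⟩
  have key : ∀ t : ℕ, ((J : ℝ) + 1) * ∑ k ∈ range t, ((k : ℝ) + 1) ^ J
      ≤ (t : ℝ) ^ (J + 1) + (J + 1) * (t : ℝ) ^ J := by
    intro t
    induction t with
    | zero => simp; positivity
    | succ t ih =>
      rw [sum_range_succ, mul_add]
      have h : (t : ℝ) ^ (J + 1) + (J + 1) * (t : ℝ) ^ J ≤ ((t : ℝ) + 1) ^ (J + 1) := by
        rcases Nat.eq_zero_or_pos t with rfl | ht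
        · rcases Nat.eq_zero_or_pos J with rfl | hJ
          · simp
          · simp [hJ.ne']
        have ht' : (0 : ℝ) < t := by exact_mod_cast ht
        have hb := one_add_mul_le_pow (a := 1 / (t : ℝ)) (by
          have : (0 : ℝ) ≤ 1 / t := by positivity
          linarith) (J + 1)
        have e1 : ((t : ℝ) + 1) ^ (J + 1) = (t : ℝ) ^ (J + 1) * (1 + 1 / (t : ℝ)) ^ (J + 1) := by
          rw [← mul_pow]; congr 1; field_simp
        rw [e1]
        calc (t : ℝ) ^ (J + 1) + (J + 1) * (t : ℝ) ^ J
            = (t : ℝ) ^ (J + 1) * (1 + ((J + 1 : ℕ) : ℝ) * (1 / t)) := by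
              push_cast; field_simp; ring
          _ ≤ _ := by gcongr
      push_cast
      linarith
  have hT' : (0 : ℝ) < T := by exact_mod_cast hT
  have := key T
  rw [Fin.sum_univ_eq_sum_range (fun k => (1 / (T : ℝ)) * (((k : ℕ) + 1 : ℝ) / T) ^ (J + 1 - 1)) T]
  simp only [Nat.add_sub_cancel, div_pow]
  rw [← mul_sum, ← sum_div]
  push_cast
  set s := ∑ k ∈ range T, ((k : ℝ) + 1) ^ J
  have hs : s ≤ ((T : ℝ) ^ (J + 1) + (J + 1) * (T : ℝ) ^ J) / (J + 1) := by
    rw [le_div_iff₀ (by positivity)]; linarith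
  calc 1 / (T : ℝ) * (s / T ^ J)
      ≤ 1 / (T : ℝ) * ((((T : ℝ) ^ (J + 1) + (J + 1) * (T : ℝ) ^ J) / (J + 1)) / T ^ J) := by gcongr
    _ = _ := by field_simp; ring

open Finset in
/-- A lower bound on minus the expected logarithm of the maximum of `K` independent uniform
elements of `{1/T, …, T/T}`, whose continuous analogue is `1 / K`: see `log_le_neg_sum`. -/
theorem harmonic_pow_lower (K T : ℕ) (hK : 2 ≤ K) (hT : 1 ≤ T) :
    1 / (K : ℝ) - K / T ≤ ∑ k ∈ range T, ((k : ℝ) / T) ^ K / (k + 1) := by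
  obtain ⟨J, rfl⟩ : ∃ J, K = J + 2 := ⟨K - 2, by omega⟩
  have hT' : (0 : ℝ) < T := by exact_mod_cast hT
  -- Bernoulli's inequality for `(k / (k + 1)) ^ K = (1 - 1 / (k + 1)) ^ K`
  have hb : ∀ k : ℕ, ((k : ℝ) + 1) ^ (J + 2) - (J + 2) * ((k : ℝ) + 1) ^ (J + 1)
      ≤ (k : ℝ) ^ (J + 2) := by
    intro k
    have hb := one_add_mul_le_pow (a := -(1 / ((k : ℝ) + 1))) (by
      have : 1 / ((k : ℝ) + 1) ≤ 1 := by
        rw [div_le_one (by positivity)]; linarith [(Nat.cast_nonneg k : (0 : ℝ) ≤ k)]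
      linarith) (J + 2)
    have e1 : (k : ℝ) ^ (J + 2)
        = ((k : ℝ) + 1) ^ (J + 2) * (1 + -(1 / ((k : ℝ) + 1))) ^ (J + 2) := by
      rw [← mul_pow]; congr 1; field_simp; ring
    rw [e1]
    calc ((k : ℝ) + 1) ^ (J + 2) - (J + 2) * ((k : ℝ) + 1) ^ (J + 1)
        = ((k : ℝ) + 1) ^ (J + 2) * (1 + ((J + 2 : ℕ) : ℝ) * -(1 / ((k : ℝ) + 1))) := by
          push_cast; field_simp; ring
      _ ≤ _ := by gcongr
  have key : ∀ t : ℕ, (t : ℝ) ^ (J + 2) ≤ (J + 2) * ∑ k ∈ range t, ((k : ℝ) + 1) ^ (J + 1) := by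
    intro t
    induction t with
    | zero => simp
    | succ t ih =>
      rw [sum_range_succ, mul_add]
      have := hb t
      push_cast
      linarith
  have h1 : ∀ k ∈ range T, (((k : ℝ) + 1) ^ (J + 1) - (J + 2) * (T : ℝ) ^ J) / (T : ℝ) ^ (J + 2)
      ≤ ((k : ℝ) / T) ^ (J + 2) / (k + 1) := by
    intro k hk
    have hkT : (k : ℝ) + 1 ≤ T := by exact_mod_cast mem_range.mp hk
    rw [div_pow, div_right_comm]
    gcongr
    rw [le_div_iff₀ (by positivity)]
    have h2 : ((k : ℝ) + 1) ^ J ≤ (T : ℝ) ^ J := by gcongr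
    have h3 : ((J : ℝ) + 2) * (k + 1) * ((k : ℝ) + 1) ^ J ≤ ((J : ℝ) + 2) * (k + 1) * (T : ℝ) ^ J := by
      gcongr
    have := hb k
    have e1 : ((k : ℝ) + 1) ^ (J + 2) = ((k : ℝ) + 1) ^ (J + 1) * (k + 1) := by ring
    have e2 : ((k : ℝ) + 1) ^ (J + 1) = ((k : ℝ) + 1) ^ J * (k + 1) := by ring
    nlinarith
  refine le_trans ?_ (sum_le_sum h1)
  rw [← sum_div, sum_sub_distrib]
  simp only [sum_const, card_range, nsmul_eq_mul]
  have := key T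
  set s := ∑ k ∈ range T, ((k : ℝ) + 1) ^ (J + 1)
  have hs : (T : ℝ) ^ (J + 2) / (J + 2) ≤ s := by
    rw [div_le_iff₀ (by positivity)]; linarith
  push_cast
  calc 1 / ((J : ℝ) + 2) - (J + 2) / T
      = ((T : ℝ) ^ (J + 2) / (J + 2) - T * ((J + 2) * (T : ℝ) ^ J)) / (T : ℝ) ^ (J + 2) := by
        field_simp
        ring
    _ ≤ _ := by gcongr

open Finset in
/-- Summation by parts for the logarithm: averaged over a random `j`, the right-hand side only
involves the probabilities of `j ≤ k`. -/
theorem log_le_neg_sum (T j : ℕ) (hj : 1 ≤ j) (hjT : j ≤ T) :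
    Real.log ((j : ℝ) / T) ≤ -∑ k ∈ range T, if j ≤ k then 1 / ((k : ℝ) + 1) else 0 := by
  induction T, hjT using Nat.le_induction with
  | base =>
    have h : ∑ k ∈ range j, (if j ≤ k then 1 / ((k : ℝ) + 1) else 0) = 0 :=
      sum_eq_zero fun k hk => if_neg (by have := mem_range.mp hk; omega)
    have hj' : (j : ℝ) ≠ 0 := by positivity
    rw [h, div_self hj']
    simp
  | succ T hT ih =>
    rw [sum_range_succ, if_pos hT]
    have hj' : (0 : ℝ) < j := by exact_mod_cast hj
    have hT' : (0 : ℝ) < T := by exact_mod_cast (by omega : 0 < T)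
    have e : (j : ℝ) / (T + 1 : ℕ) = (j / T) * (T / (T + 1)) := by push_cast; field_simp
    rw [e, Real.log_mul (by positivity) (by positivity)]
    have := Real.log_le_sub_one_of_pos (x := (T : ℝ) / (T + 1)) (by positivity)
    have e2 : (T : ℝ) / (T + 1) - 1 = -(1 / ((T : ℝ) + 1)) := by field_simp; ring
    linarith

open Finset in
theorem card_labels_lt {V : Type*} [Fintype V] [DecidableEq V] (T k : ℕ) (hT : 1 ≤ T) (hk : k ≤ T)
    (W : Finset V) :
    ((univ.filter fun l : V → Fin T => ∀ u ∈ W, (l u : ℕ) < k).card : ℝ)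
      = (T : ℝ) ^ Fintype.card V * ((k : ℝ) / T) ^ W.card := by
  have e : (univ.filter fun l : V → Fin T => ∀ u ∈ W, (l u : ℕ) < k)
      = Fintype.piFinset fun u => if u ∈ W then univ.filter (fun i : Fin T => (i : ℕ) < k)
          else univ := by
    ext l
    simp only [mem_filter, mem_univ, true_and, Fintype.mem_piFinset]
    refine forall_congr' fun u => ?_
    by_cases hu : u ∈ W <;> simp [hu]
  have hc : (univ.filter (fun i : Fin T => (i : ℕ) < k)).card = k := by
    rw [Fin.card_filter_val_lt]; omega
  have hT' : (0 : ℝ) < T := by exact_mod_cast hT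
  rw [e, Fintype.card_piFinset]
  push_cast
  calc ∏ u : V, (((if u ∈ W then univ.filter (fun i : Fin T => (i : ℕ) < k)
          else univ).card : ℕ) : ℝ)
      = ∏ u : V, ((T : ℝ) * if u ∈ W then (k : ℝ) / T else 1) := by
        refine prod_congr rfl fun u _ => ?_
        by_cases hu : u ∈ W
        · simp only [hu, if_true, hc]; field_simp
        · simp [hu]
    _ = _ := by
        rw [prod_mul_distrib, prod_ite_mem, univ_inter]
        simp [div_pow]

open Finset in
/-- The labellings of `V` whose maximum over `W ∋ v` is `k`, attained at `v`. -/
theorem card_labels_max {V : Type*} [Fintype V] [DecidableEq V] (T : ℕ) (k : Fin T)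
    (W : Finset V) (v : V) (hv : v ∈ W) :
    ((univ.filter fun l : V → Fin T => l v = k ∧ ∀ u ∈ W, l u ≤ k).card : ℝ)
      = (T : ℝ) ^ Fintype.card V * (1 / T * (((k : ℕ) + 1 : ℝ) / T) ^ (W.card - 1)) := by
  have e : (univ.filter fun l : V → Fin T => l v = k ∧ ∀ u ∈ W, l u ≤ k)
      = Fintype.piFinset fun u => if u = v then {k} else if u ∈ W.erase v then Iic k
          else univ := by
    ext l
    simp only [mem_filter, mem_univ, true_and, Fintype.mem_piFinset]
    constructor
    · rintro ⟨h1, h2⟩ u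
      by_cases huv : u = v
      · simp [huv, h1]
      · by_cases hu : u ∈ W <;> simp [huv, hu, h2]
    · intro h
      have hv' : l v = k := by simpa using h v
      refine ⟨hv', fun u hu => ?_⟩
      by_cases huv : u = v
      · rw [huv, hv']
      · simpa [huv, hu] using h u
  have hT' : (0 : ℝ) < T := by exact_mod_cast (by have := k.2; omega : 0 < T)
  rw [e, Fintype.card_piFinset]
  push_cast
  calc ∏ u : V, (((if u = v then {k} else if u ∈ W.erase v then Iic k
          else univ : Finset (Fin T)).card : ℕ) : ℝ)
      = ∏ u : V, ((T : ℝ) * ((if u = v then 1 / (T : ℝ) else 1) *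
          if u ∈ W.erase v then ((k : ℕ) + 1 : ℝ) / T else 1)) := by
        refine prod_congr rfl fun u _ => ?_
        by_cases huv : u = v
        · simp [huv]; field_simp
        · by_cases hu : u ∈ W
          · simp [huv, hu]; field_simp
          · simp [huv, hu]
    _ = _ := by
        rw [prod_mul_distrib, prod_mul_distrib, prod_ite_mem, univ_inter, prod_ite_eq']
        simp [card_erase_of_mem hv, div_pow]

/-! ### Sequential choice of a perfect matching -/

/-- `M` is a perfect matching of the vertex set `U`: the vertex sets `φ e`, for `e ∈ M`, partition
`U`. Edges are an arbitrary type `E`, with `φ` giving the vertices of each edge. -/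
def IsPM {V E : Type*} (φ : E → Finset V) (U : Finset V) (M : Finset E) : Prop :=
  (∀ e ∈ M, φ e ⊆ U) ∧ ∀ v ∈ U, ∃! e, e ∈ M ∧ v ∈ φ e

/-- Every edge of `M` meeting `f` has all its labels at most `l v`. When `M` is revealed in the order
of decreasing maximal label, no vertex of `f` has been covered before the label `l v` is reached. -/
def Clear {V E : Type*} (φ : E → Finset V) (M : Finset E) (l : V → ℕ) (v : V) (f : E) : Prop :=
  ∀ g ∈ M, ¬Disjoint (φ g) (φ f) → ∀ u ∈ φ g, l u ≤ l v

open Classical in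
/-- The edges of `S` that could have been chosen in place of `e ∈ M` when `M` is revealed in the order
of decreasing maximal label: those through a vertex `v` of `e` that are still uncovered at `v`.
Ties between labels are not broken; they only make this set larger. -/
noncomputable def choices {V E : Type*} (φ : E → Finset V) (S : Finset E) (l : V → ℕ)
    (M : Finset E) (e : E) : Finset E :=
  S.filter fun f => φ f ⊆ M.biUnion φ ∧ ∃ v ∈ φ e, v ∈ φ f ∧ Clear φ M l v f

theorem mem_choices {V E : Type*} [DecidableEq V] {φ : E → Finset V} {S : Finset E} {l : V → ℕ}
    {M : Finset E} {e f : E} : f ∈ choices φ S l M e ↔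
      f ∈ S ∧ φ f ⊆ M.biUnion φ ∧ ∃ v ∈ φ e, v ∈ φ f ∧ Clear φ M l v f := by
  classical
  simp only [choices, Finset.mem_filter]
  convert Iff.rfl

theorem IsPM.eq_of_mem {V E : Type*} {φ : E → Finset V} {U : Finset V} {M : Finset E}
    (h : IsPM φ U M) {e f : E} {v : V} (he : e ∈ M) (hf : f ∈ M) (hve : v ∈ φ e)
    (hvf : v ∈ φ f) : e = f :=
  (h.2 v (h.1 e he hve)).unique ⟨he, hve⟩ ⟨hf, hvf⟩

theorem IsPM.biUnion_eq {V E : Type*} [DecidableEq V] {φ : E → Finset V} {U : Finset V}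
    {M : Finset E} (h : IsPM φ U M) : M.biUnion φ = U := by
  ext v
  rw [Finset.mem_biUnion]
  constructor
  · rintro ⟨e, he, hv⟩
    exact h.1 e he hv
  · intro hv
    obtain ⟨e, ⟨he, hve⟩, _⟩ := h.2 v hv
    exact ⟨e, he, hve⟩

theorem IsPM.pairwiseDisjoint {V E : Type*} {φ : E → Finset V} {U : Finset V}
    {M : Finset E} (h : IsPM φ U M) : (M : Set E).PairwiseDisjoint φ := by
  intro e he f hf hne
  refine Finset.disjoint_left.mpr fun v hve hvf => hne (h.eq_of_mem he hf hve hvf)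

theorem IsPM.erase {V E : Type*} [DecidableEq V] [DecidableEq E] {φ : E → Finset V} {U : Finset V}
    {M : Finset E} (h : IsPM φ U M) {e : E} (he : e ∈ M) : IsPM φ (U \ φ e) (M.erase e) := by
  refine ⟨fun f hf => ?_, fun v hv => ?_⟩
  · obtain ⟨hfe, hfM⟩ := Finset.mem_erase.mp hf
    exact Finset.subset_sdiff.mpr ⟨h.1 f hfM, h.pairwiseDisjoint hfM he hfe⟩
  · obtain ⟨hvU, hve⟩ := Finset.mem_sdiff.mp hv
    obtain ⟨f, ⟨hf, hvf⟩, huniq⟩ := h.2 v hvU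
    refine ⟨f, ⟨Finset.mem_erase.mpr ⟨?_, hf⟩, hvf⟩, fun g hg =>
      huniq g ⟨Finset.mem_of_mem_erase hg.1, hg.2⟩⟩
    rintro rfl
    exact hve hvf

/-- The edges of a perfect matching of `U` cut any `W ⊆ U` into disjoint pieces. -/
theorem IsPM.sum_card_inter {V E : Type*} [DecidableEq V] {φ : E → Finset V} {U : Finset V}
    {M : Finset E} (h : IsPM φ U M) {W : Finset V} (hW : W ⊆ U) :
    ∑ g ∈ M, (φ g ∩ W).card = W.card := by
  classical
  rw [← Finset.card_biUnion]
  · congr 1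
    rw [← Finset.biUnion_inter, h.biUnion_eq]
    exact Finset.inter_eq_right.mpr hW
  · intro a ha b hb hab
    exact (h.pairwiseDisjoint ha hb hab).mono Finset.inter_subset_left Finset.inter_subset_left

theorem self_mem_choices {V E : Type*} {φ : E → Finset V} {S : Finset E} {l : V → ℕ}
    {U : Finset V} {M : Finset E} (h : IsPM φ U M) (hMS : M ⊆ S) (hne : ∀ e ∈ S, (φ e).Nonempty)
    {e : E} (he : e ∈ M) : e ∈ choices φ S l M e := by
  classical
  obtain ⟨v, hv, hmax⟩ := (φ e).exists_max_image l (hne e (hMS he))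
  refine mem_choices.mpr ⟨hMS he, Finset.subset_biUnion_of_mem φ he, v, hv, hv, fun g hg hd u hu => ?_⟩
  obtain ⟨w, hwg, hwe⟩ := Finset.not_disjoint_iff.mp hd
  obtain rfl := h.eq_of_mem hg he hwg hwe
  exact hmax u hu

open Classical in
/-- For a fixed labelling, build a perfect matching edge by edge, each time choosing uniformly among
the edges available at the uncovered vertex of largest label. The matching `M` arises with
probability at least the product on the left, and these probabilities sum to at most `1`. -/
theorem sum_prod_inv_choices_le_one {V E : Type*} (φ : E → Finset V)
    (S : Finset E) (hne : ∀ e ∈ S, (φ e).Nonempty) (l : V → ℕ) (U : Finset V) :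
    ∑ M ∈ S.powerset.filter (IsPM φ U), ∏ e ∈ M, ((choices φ S l M e).card : ℝ)⁻¹ ≤ 1 := by
  induction U using Finset.strongInduction with
  | H U ih =>
  rcases U.eq_empty_or_nonempty with rfl | hU
  · have hsub : S.powerset.filter (IsPM φ ∅) ⊆ {∅} := by
      intro M hM
      obtain ⟨hMS, hM⟩ := Finset.mem_filter.mp hM
      rw [Finset.mem_singleton, Finset.eq_empty_iff_forall_notMem]
      intro e he
      obtain ⟨v, hv⟩ := hne e (Finset.mem_powerset.mp hMS he)
      exact absurd (hM.1 e he hv) (Finset.notMem_empty v)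
    refine (Finset.sum_le_sum_of_subset_of_nonneg hsub fun _ _ _ =>
      Finset.prod_nonneg fun _ _ => by positivity).trans ?_
    simp
  obtain ⟨v, hvU, hmax⟩ := U.exists_max_image l hU
  set C := S.filter fun f => v ∈ φ f ∧ φ f ⊆ U with hC
  set F : Finset E → ℝ := fun M => ∏ e ∈ M, ((choices φ S l M e).card : ℝ)⁻¹ with hF
  have hF0 : ∀ M, 0 ≤ F M := fun M => Finset.prod_nonneg fun _ _ => by positivity
  have hF0' : ∀ M M' : Finset E, 0 ≤ ∏ e ∈ M, ((choices φ S l M' e).card : ℝ)⁻¹ :=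
    fun M M' => Finset.prod_nonneg fun _ _ => by positivity
  have step : ∀ e ∈ C, ∀ M ∈ (S.powerset.filter (IsPM φ U)).filter (e ∈ ·),
      F M ≤ (C.card : ℝ)⁻¹ * F (M.erase e) := by
    intro e heC M hM
    obtain ⟨hM, heM⟩ := Finset.mem_filter.mp hM
    obtain ⟨hMS, hM⟩ := Finset.mem_filter.mp hM
    rw [Finset.mem_powerset] at hMS
    have hve := (Finset.mem_filter.mp heC).2.1
    rw [hF]
    dsimp only
    rw [← Finset.mul_prod_erase M _ heM]
    have hCpos : 0 < C.card := Finset.card_pos.mpr ⟨e, heC⟩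
    refine mul_le_mul (inv_anti₀ (by exact_mod_cast hCpos) (Nat.cast_le.mpr
      (Finset.card_le_card ?_))) (Finset.prod_le_prod (fun _ _ => by positivity) fun f hf =>
      inv_anti₀ ?_ (Nat.cast_le.mpr (Finset.card_le_card ?_))) (hF0' _ _) (by positivity)
    · intro f hf
      obtain ⟨hfS, hvf, hfU⟩ := Finset.mem_filter.mp hf
      refine mem_choices.mpr ⟨hfS, by rwa [hM.biUnion_eq], v, hve, hvf,
        fun g hg _ u hu => hmax u (hM.1 g hg hu)⟩
    · exact_mod_cast Finset.card_pos.mpr ⟨f, self_mem_choices (hM.erase heM)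
        ((Finset.erase_subset _ _).trans hMS) hne hf⟩
    · intro f' hf'
      obtain ⟨hfS, hfU, w, hwf, hwf', hclear⟩ := mem_choices.mp hf'
      rw [(hM.erase heM).biUnion_eq, Finset.subset_sdiff] at hfU
      refine mem_choices.mpr ⟨hfS, by rw [hM.biUnion_eq]; exact hfU.1, w, hwf, hwf',
        fun g hg hd u hu => ?_⟩
      rcases eq_or_ne g e with rfl | hge
      · exact absurd hfU.2.symm hd
      · exact hclear g (Finset.mem_erase.mpr ⟨hge, hg⟩) hd u hu
  have inner : ∀ e ∈ C, ∑ M ∈ (S.powerset.filter (IsPM φ U)).filter (e ∈ ·), F M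
      ≤ (C.card : ℝ)⁻¹ := by
    intro e heC
    have hve := (Finset.mem_filter.mp heC).2.1
    calc ∑ M ∈ (S.powerset.filter (IsPM φ U)).filter (e ∈ ·), F M
        ≤ ∑ M ∈ (S.powerset.filter (IsPM φ U)).filter (e ∈ ·),
            (C.card : ℝ)⁻¹ * F (M.erase e) := Finset.sum_le_sum (step e heC)
      _ = (C.card : ℝ)⁻¹ * ∑ M' ∈ ((S.powerset.filter (IsPM φ U)).filter (e ∈ ·)).image
            (fun M => M.erase e), F M' := by
          rw [← Finset.mul_sum, Finset.sum_image]
          intro M hM M' hM' heq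
          have h1 := (Finset.mem_filter.mp hM).2
          have h2 := (Finset.mem_filter.mp hM').2
          rw [← Finset.insert_erase h1, ← Finset.insert_erase h2]
          exact congrArg (insert e) heq
      _ ≤ (C.card : ℝ)⁻¹ * ∑ M' ∈ S.powerset.filter (IsPM φ (U \ φ e)), F M' := by
          refine mul_le_mul_of_nonneg_left
            (Finset.sum_le_sum_of_subset_of_nonneg ?_ fun _ _ _ => hF0 _) (by positivity)
          · intro M' hM'
            obtain ⟨M, hM, rfl⟩ := Finset.mem_image.mp hM'
            obtain ⟨hM, heM⟩ := Finset.mem_filter.mp hM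
            obtain ⟨hMS, hM⟩ := Finset.mem_filter.mp hM
            exact Finset.mem_filter.mpr ⟨Finset.mem_powerset.mpr
              ((Finset.erase_subset _ _).trans (Finset.mem_powerset.mp hMS)), hM.erase heM⟩
      _ ≤ (C.card : ℝ)⁻¹ * 1 := by
          refine mul_le_mul_of_nonneg_left (ih _ ?_) (by positivity)
          refine (Finset.ssubset_iff_subset_ne.mpr ⟨Finset.sdiff_subset, fun h => ?_⟩)
          rw [← h] at hvU
          exact (Finset.mem_sdiff.mp hvU).2 hve
      _ = _ := mul_one _
  calc ∑ M ∈ S.powerset.filter (IsPM φ U), F M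
      ≤ ∑ M ∈ S.powerset.filter (IsPM φ U), ∑ e ∈ C, if e ∈ M then F M else 0 := by
        refine Finset.sum_le_sum fun M hM => ?_
        obtain ⟨hMS, hM⟩ := Finset.mem_filter.mp hM
        obtain ⟨e, ⟨he, hve⟩, _⟩ := hM.2 v hvU
        have heC : e ∈ C := Finset.mem_filter.mpr
          ⟨Finset.mem_powerset.mp hMS he, hve, hM.1 e he⟩
        have := Finset.single_le_sum (f := fun e => if e ∈ M then F M else 0)
          (fun e _ => by split_ifs; exacts [hF0 M, le_rfl]) heC
        simpa [he] using this
    _ = ∑ e ∈ C, ∑ M ∈ (S.powerset.filter (IsPM φ U)).filter (e ∈ ·), F M := by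
        rw [Finset.sum_comm]
        simp only [Finset.sum_filter]
    _ ≤ ∑ e ∈ C, (C.card : ℝ)⁻¹ := Finset.sum_le_sum inner
    _ ≤ 1 := by
        rw [Finset.sum_const, nsmul_eq_mul]
        exact mul_inv_le_one

/-! ### Averaging over the labels -/

open Finset in
/-- With `y_v = (l v + 1) / T`, the sum over labellings `l` in which `v` has the largest label of a set
`W` of `K ^ 2` vertices, of `y_v ^ (-K (K - 1))`. Conditionally on `y_v` the event has probability
`y_v ^ (K ^ 2 - 1)`, so the average is a Riemann sum of `y ^ (K - 1)`. -/
theorem sum_labels_clear_le {V : Type*} [Fintype V] [DecidableEq V] (K T : ℕ) (hK : 1 ≤ K)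
    (hT : 1 ≤ T) (W : Finset V) (v : V) (hv : v ∈ W) (hW : W.card = K * K) :
    ∑ l : V → Fin T, (if ∀ u ∈ W, l u ≤ l v then
        (((((l v : ℕ) : ℝ) + 1) / T) ^ (K * (K - 1)))⁻¹ else 0)
      ≤ (T : ℝ) ^ Fintype.card V * (1 / K + 1 / T) := by
  have hT' : (0 : ℝ) < T := by exact_mod_cast hT
  calc ∑ l : V → Fin T, (if ∀ u ∈ W, l u ≤ l v then
        (((((l v : ℕ) : ℝ) + 1) / T) ^ (K * (K - 1)))⁻¹ else 0)
      = ∑ l : V → Fin T, ∑ k : Fin T, (if l v = k ∧ ∀ u ∈ W, l u ≤ k then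
        (((((k : ℕ) : ℝ) + 1) / T) ^ (K * (K - 1)))⁻¹ else 0) := by
        refine sum_congr rfl fun l _ => ?_
        rw [sum_eq_single (l v)]
        · simp
        · intro k _ hk
          rw [if_neg fun h => hk h.1.symm]
        · simp
    _ = ∑ k : Fin T, (T : ℝ) ^ Fintype.card V *
          (1 / T * ((((k : ℕ) : ℝ) + 1) / T) ^ (K - 1)) := by
        rw [sum_comm]
        refine sum_congr rfl fun k _ => ?_
        rw [← sum_filter, sum_const, nsmul_eq_mul, card_labels_max T k W v hv, hW]
        have e : K * K - 1 = K * (K - 1) + (K - 1) := by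
          obtain ⟨J, rfl⟩ : ∃ J, K = J + 1 := ⟨K - 1, by omega⟩
          simp only [Nat.add_sub_cancel]
          have : (J + 1) * (J + 1) = (J + 1) * J + J + 1 := by ring
          omega
        have hy : (0 : ℝ) < (((k : ℕ) : ℝ) + 1) / T := by positivity
        rw [e, pow_add]
        field_simp
    _ ≤ _ := by
        rw [← mul_sum]
        exact mul_le_mul_of_nonneg_left (sum_pow_upper K T hK hT) (by positivity)

open Classical in
/-- The inequality `log N ≤ log a + N / a - 1` at `a = A y ^ p`, where `y = (max l + 1) / T` is the
largest normalised label in `e`. It replaces Jensen's inequality conditioned on `y`. -/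
theorem log_card_choices_le {V E : Type*} [DecidableEq V] (φ : E → Finset V)
    (S : Finset E) (U : Finset V) (T p : ℕ) (hT : 1 ≤ T)
    (hne : ∀ e ∈ S, (φ e).Nonempty) (A : ℝ) (hA : 0 < A)
    (M : Finset E) (hMS : M ⊆ S) (hM : IsPM φ U M) (e : E) (he : e ∈ M) (l : V → Fin T) :
    Real.log ((choices φ S (fun u => (l u : ℕ)) M e).card) ≤
      Real.log A - p * ∑ k ∈ Finset.range T,
          (if ∀ u ∈ φ e, (l u : ℕ) < k then 1 / ((k : ℝ) + 1) else 0)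
        + (∑ v ∈ φ e, ∑ f ∈ S.filter (fun f => v ∈ φ f),
          (if Clear φ M (fun u => (l u : ℕ)) v f then
            (((((l v : ℕ) : ℝ) + 1) / T) ^ p)⁻¹ else 0)) / A - 1 := by
  have hT' : (0 : ℝ) < T := by exact_mod_cast hT
  obtain ⟨w, hw, hmax⟩ := (φ e).exists_max_image (fun u => (l u : ℕ)) (hne e (hMS he))
  set N := choices φ S (fun u => (l u : ℕ)) M e with hN
  set y : ℝ := (((l w : ℕ) : ℝ) + 1) / T with hy
  have hy0 : 0 < y := by positivity
  have hNpos : (0 : ℝ) < N.card := by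
    exact_mod_cast Finset.card_pos.mpr ⟨e, self_mem_choices hM hMS hne he⟩
  have hlogy : Real.log y ≤ -∑ k ∈ Finset.range T,
      (if ∀ u ∈ φ e, (l u : ℕ) < k then 1 / ((k : ℝ) + 1) else 0) := by
    have h := log_le_neg_sum T ((l w : ℕ) + 1) (by omega) (l w).2
    push_cast at h
    refine h.trans (le_of_eq (congrArg _ (Finset.sum_congr rfl fun k _ => ?_)))
    refine if_congr ⟨fun hk u hu => ?_, fun hk => hk w hw⟩ rfl rfl
    have := hmax u hu
    omega
  have hcount : (N.card : ℝ) * (y ^ p)⁻¹ ≤ ∑ v ∈ φ e, ∑ f ∈ S.filter (fun f => v ∈ φ f),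
          (if Clear φ M (fun u => (l u : ℕ)) v f then
            (((((l v : ℕ) : ℝ) + 1) / T) ^ p)⁻¹ else 0) := by
    have hsub : N ⊆ (φ e).biUnion fun v => (S.filter (fun f => v ∈ φ f)).filter
        (Clear φ M (fun u => (l u : ℕ)) v) := by
      intro f hf
      obtain ⟨hfS, _, v, hve, hvf, hc⟩ := mem_choices.mp hf
      exact Finset.mem_biUnion.mpr ⟨v, hve, Finset.mem_filter.mpr
        ⟨Finset.mem_filter.mpr ⟨hfS, hvf⟩, hc⟩⟩
    have h1 : (N.card : ℝ) ≤ ∑ v ∈ φ e, (((S.filter (fun f => v ∈ φ f)).filter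
        (Clear φ M (fun u => (l u : ℕ)) v)).card : ℝ) := by
      exact_mod_cast (Finset.card_le_card hsub).trans Finset.card_biUnion_le
    refine (mul_le_mul_of_nonneg_right h1 (by positivity)).trans ?_
    rw [Finset.sum_mul]
    refine Finset.sum_le_sum fun v hv => ?_
    rw [← Finset.sum_filter, Finset.sum_const, nsmul_eq_mul]
    refine mul_le_mul_of_nonneg_left ?_ (by positivity)
    have hvw : ((l v : ℕ) : ℝ) ≤ (l w : ℕ) := by exact_mod_cast hmax v hv
    refine inv_anti₀ (by positivity) ?_
    rw [hy]
    gcongr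
  have hx : 0 < (N.card : ℝ) * (y ^ p)⁻¹ / A := by positivity
  have e1 : (N.card : ℝ) = A * y ^ p * ((N.card : ℝ) * (y ^ p)⁻¹ / A) := by
    field_simp
  have h2 := Real.log_le_sub_one_of_pos hx
  have h3 : (N.card : ℝ) * (y ^ p)⁻¹ / A ≤ _ := div_le_div_of_nonneg_right hcount hA.le
  have h4 : (p : ℝ) * Real.log y ≤ _ := mul_le_mul_of_nonneg_left hlogy (Nat.cast_nonneg p)
  rw [e1, Real.log_mul (by positivity) hx.ne', Real.log_mul hA.ne' (by positivity), Real.log_pow]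
  linarith

open Classical in
/-- If `f` meets every edge of `M` in at most one vertex, then it meets exactly `K` of them, and these
have `K ^ 2` vertices in total. -/
theorem sum_labels_good_le {V E : Type*} [Fintype V] [DecidableEq V] (φ : E → Finset V)
    (S : Finset E) (U : Finset V) (K T : ℕ) (hK : 1 ≤ K) (hT : 1 ≤ T)
    (hU : ∀ e ∈ S, φ e ⊆ U) (hcard : ∀ e ∈ S, (φ e).card = K)
    (M : Finset E) (hMS : M ⊆ S) (hM : IsPM φ U M) (v : V) (f : E) (hf : f ∈ S) (hv : v ∈ φ f)
    (hgood : ¬∃ g ∈ M, 2 ≤ (φ g ∩ φ f).card) :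
    ∑ l : V → Fin T, (if Clear φ M (fun u => (l u : ℕ)) v f then
            (((((l v : ℕ) : ℝ) + 1) / T) ^ (K * (K - 1)))⁻¹ else 0)
      ≤ (T : ℝ) ^ Fintype.card V * (1 / K + 1 / T) := by
  set R := M.filter fun g => ¬Disjoint (φ g) (φ f) with hR
  have hRK : R.card = K := by
    rw [← hcard f hf, ← hM.sum_card_inter (hU f hf), hR, Finset.card_filter]
    refine Finset.sum_congr rfl fun g hg => ?_
    push Not at hgood
    have h1 := hgood g hg
    split_ifs with hd
    · rw [Finset.disjoint_iff_inter_eq_empty] at hd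
      simp [hd]
    · have : 0 < (φ g ∩ φ f).card := by
        rw [Finset.card_pos, Finset.nonempty_iff_ne_empty]
        rwa [Finset.disjoint_iff_inter_eq_empty] at hd
      omega
  have hW : (R.biUnion φ).card = K * K := by
    rw [Finset.card_biUnion, Finset.sum_congr rfl fun g hg =>
      hcard g (hMS (Finset.mem_filter.mp hg).1), Finset.sum_const, hRK, smul_eq_mul]
    intro a ha b hb hab
    exact hM.pairwiseDisjoint (Finset.mem_filter.mp ha).1 (Finset.mem_filter.mp hb).1 hab
  have hvW : v ∈ R.biUnion φ := by
    obtain ⟨g, ⟨hg, hvg⟩, _⟩ := hM.2 v (hU f hf hv)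
    exact Finset.mem_biUnion.mpr ⟨g, Finset.mem_filter.mpr
      ⟨hg, Finset.not_disjoint_iff.mpr ⟨v, hvg, hv⟩⟩, hvg⟩
  refine le_trans (le_of_eq (Finset.sum_congr rfl fun l _ => if_congr ?_ rfl rfl))
    (sum_labels_clear_le K T hK hT (R.biUnion φ) v hvW hW)
  constructor
  · intro h u hu
    obtain ⟨g, hg, hug⟩ := Finset.mem_biUnion.mp hu
    obtain ⟨hgM, hd⟩ := Finset.mem_filter.mp hg
    exact h g hgM hd u hug
  · intro h g hg hd u hu
    exact h u (Finset.mem_biUnion.mpr ⟨g, Finset.mem_filter.mpr ⟨hg, hd⟩, hu⟩)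

open Classical in
/-- The trivial bound, used for the few edges `f` meeting an edge of `M` in several vertices. -/
theorem sum_labels_le {V E : Type*} [Fintype V] [DecidableEq V] (φ : E → Finset V)
    (M : Finset E) (T p : ℕ) (hT : 1 ≤ T) (v : V) (f : E) :
    ∑ l : V → Fin T, (if Clear φ M (fun u => (l u : ℕ)) v f then
            (((((l v : ℕ) : ℝ) + 1) / T) ^ p)⁻¹ else 0)
      ≤ (T : ℝ) ^ Fintype.card V * (T : ℝ) ^ p := by
  have hT' : (0 : ℝ) < T := by exact_mod_cast hT
  calc _ ≤ ∑ l : V → Fin T, (T : ℝ) ^ p := by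
        refine Finset.sum_le_sum fun l _ => ?_
        split_ifs
        · rw [← inv_pow, inv_div]
          gcongr
          rw [div_le_iff₀ (by positivity)]
          nlinarith [(Nat.cast_nonneg (l v : ℕ) : (0 : ℝ) ≤ (l v : ℕ))]
        · positivity
    _ = _ := by simp

open Classical in
/-- Averaged over all labellings, the logarithm of the number of choices along `M` is at most
`log A - (K - 1) + o(1)` per edge. The term `p * log y` contributes `-K (K - 1) / K`, while the
terms `N / a` and `-1` of the tangent line cancel up to the error terms. -/
theorem sum_labels_log_le {V E : Type*} [Fintype V] [DecidableEq V] (φ : E → Finset V)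
    (S : Finset E) (U : Finset V) (K T : ℕ) (hK : 2 ≤ K) (hT : 1 ≤ T)
    (hU : ∀ e ∈ S, φ e ⊆ U) (hcard : ∀ e ∈ S, (φ e).card = K) (A B : ℝ) (hA : 0 < A)
    (hdeg : ∀ v ∈ U, ((S.filter fun f => v ∈ φ f).card : ℝ) ≤ A)
    (M : Finset E) (hMS : M ⊆ S) (hM : IsPM φ U M)
    (hbad : ((S.filter fun f => ∃ g ∈ M, 2 ≤ (φ g ∩ φ f).card).card : ℝ) ≤ B * M.card) :
    ∑ l : V → Fin T, ∑ e ∈ M, Real.log ((choices φ S (fun u => (l u : ℕ)) M e).card)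
      ≤ (T : ℝ) ^ Fintype.card V * (M.card *
        (Real.log A - (K - 1) + K ^ 3 / T + (T : ℝ) ^ (K * (K - 1)) * K * B / A)) := by
  have hT' : (0 : ℝ) < T := by exact_mod_cast hT
  have hK' : (0 : ℝ) < K := by exact_mod_cast (by omega : 0 < K)
  have hne : ∀ e ∈ S, (φ e).Nonempty := fun e he => Finset.card_pos.mp (by rw [hcard e he]; omega)
  set p := K * (K - 1) with hp
  set Z : ℝ := (T : ℝ) ^ Fintype.card V with hZ
  have hZ0 : 0 < Z := by positivity
  set bad := S.filter fun f => ∃ g ∈ M, 2 ≤ (φ g ∩ φ f).card with hbaddef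
  set h : V → E → (V → Fin T) → ℝ := fun v f l =>
    if Clear φ M (fun u => (l u : ℕ)) v f then (((((l v : ℕ) : ℝ) + 1) / T) ^ p)⁻¹ else 0 with hh
  have hcardlab : ∑ _l : V → Fin T, (1 : ℝ) = Z := by simp [hZ]
  have hlog : ∀ e ∈ M, Z * (1 / K - K / T) ≤ ∑ l : V → Fin T, ∑ k ∈ Finset.range T,
      (if ∀ u ∈ φ e, (l u : ℕ) < k then 1 / ((k : ℝ) + 1) else 0) := by
    intro e he
    rw [Finset.sum_comm]
    refine (mul_le_mul_of_nonneg_left (harmonic_pow_lower K T hK hT) hZ0.le).trans (le_of_eq ?_)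
    rw [Finset.mul_sum]
    refine Finset.sum_congr rfl fun k hk => ?_
    rw [← Finset.sum_filter, Finset.sum_const, nsmul_eq_mul,
      card_labels_lt T k hT (Finset.mem_range.mp hk).le, hcard e (hMS he)]
    ring
  have hQ : ∀ v, ∀ f ∈ S.filter (fun f => v ∈ φ f),
      ∑ l, h v f l ≤ Z * (1 / K + 1 / T) + if f ∈ bad then Z * (T : ℝ) ^ p else 0 := by
    intro v f hf
    obtain ⟨hfS, hvf⟩ := Finset.mem_filter.mp hf
    by_cases hb : f ∈ bad
    · rw [if_pos hb]
      have := sum_labels_le φ M T p hT v f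
      have h0 : 0 ≤ Z * (1 / (K : ℝ) + 1 / T) := by positivity
      linarith
    · rw [if_neg hb, add_zero]
      exact sum_labels_good_le φ S U K T (by omega) hT hU hcard M hMS hM v f hfS hvf
        fun hg => hb (Finset.mem_filter.mpr ⟨hfS, hg⟩)
  -- Summing over `v` is what makes the bad edges rare: a single vertex may lie in many of them.
  have hbadsum : ∑ e ∈ M, ∑ v ∈ φ e, ∑ f ∈ S.filter (fun f => v ∈ φ f),
      (if f ∈ bad then Z * (T : ℝ) ^ p else 0) = Z * (T : ℝ) ^ p * (K * bad.card) := by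
    have e1 : ∀ e ∈ M, ∑ v ∈ φ e, ∑ f ∈ S.filter (fun f => v ∈ φ f),
        (if f ∈ bad then Z * (T : ℝ) ^ p else 0)
        = ∑ f ∈ bad, Z * (T : ℝ) ^ p * (φ e ∩ φ f).card := by
      intro e _
      simp only [Finset.sum_filter]
      rw [Finset.sum_comm]
      have : bad = S.filter (· ∈ bad) := by
        ext f
        simp only [Finset.mem_filter, hbaddef]
        tauto
      conv_rhs => rw [this, Finset.sum_filter]
      refine Finset.sum_congr rfl fun f _ => ?_
      by_cases hf : f ∈ bad
      · simp only [hf, if_true]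
        rw [← Finset.sum_filter, Finset.sum_const, nsmul_eq_mul, Finset.filter_mem_eq_inter]
        ring
      · simp [hf]
    rw [Finset.sum_congr rfl e1, Finset.sum_comm]
    have e2 : ∀ f ∈ bad, ∑ e ∈ M, Z * (T : ℝ) ^ p * ((φ e ∩ φ f).card : ℝ)
        = Z * (T : ℝ) ^ p * K := by
      intro f hf
      have hfS := (Finset.mem_filter.mp hf).1
      rw [← Finset.mul_sum, ← hcard f hfS, ← hM.sum_card_inter (hU f hfS)]
      push_cast
      rfl
    rw [Finset.sum_congr rfl e2, Finset.sum_const, nsmul_eq_mul]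
    ring
  have hmain : ∑ e ∈ M, ∑ v ∈ φ e, ∑ f ∈ S.filter (fun f => v ∈ φ f), ∑ l, h v f l
      ≤ M.card * (K * (A * (Z * (1 / K + 1 / T)))) + Z * (T : ℝ) ^ p * (K * (B * M.card)) := by
    have h1 : ∑ e ∈ M, ∑ v ∈ φ e, ∑ f ∈ S.filter (fun f => v ∈ φ f), ∑ l, h v f l
        ≤ ∑ e ∈ M, ∑ v ∈ φ e, (A * (Z * (1 / K + 1 / T)) + ∑ f ∈ S.filter (fun f => v ∈ φ f),
          (if f ∈ bad then Z * (T : ℝ) ^ p else 0)) := by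
      refine Finset.sum_le_sum fun e he => Finset.sum_le_sum fun v hv => ?_
      refine (Finset.sum_le_sum (hQ v)).trans ?_
      rw [Finset.sum_add_distrib, Finset.sum_const, nsmul_eq_mul]
      have := mul_le_mul_of_nonneg_right (hdeg v (hM.1 e he hv))
        (by positivity : 0 ≤ Z * (1 / (K : ℝ) + 1 / T))
      linarith
    refine h1.trans ?_
    simp only [Finset.sum_add_distrib]
    rw [hbadsum]
    refine add_le_add (le_of_eq ?_) ?_
    · rw [Finset.sum_congr rfl fun e he => by
        rw [Finset.sum_const, hcard e (hMS he), nsmul_eq_mul], Finset.sum_const, nsmul_eq_mul]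
    · gcongr
  calc ∑ l : V → Fin T, ∑ e ∈ M, Real.log ((choices φ S (fun u => (l u : ℕ)) M e).card)
      ≤ ∑ l : V → Fin T, ∑ e ∈ M, (Real.log A * 1 - p * ∑ k ∈ Finset.range T,
          (if ∀ u ∈ φ e, (l u : ℕ) < k then 1 / ((k : ℝ) + 1) else 0)
        + (∑ v ∈ φ e, ∑ f ∈ S.filter (fun f => v ∈ φ f), h v f l) / A - 1) := by
        refine Finset.sum_le_sum fun l _ => Finset.sum_le_sum fun e he => ?_
        rw [mul_one]
        refine (log_card_choices_le φ S U T p hT hne A hA M hMS hM e he l).trans (le_of_eq ?_)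
        congr!
    _ = ∑ e ∈ M, (Real.log A * Z - p * (∑ l : V → Fin T, ∑ k ∈ Finset.range T,
          (if ∀ u ∈ φ e, (l u : ℕ) < k then 1 / ((k : ℝ) + 1) else 0))
        + (∑ v ∈ φ e, ∑ f ∈ S.filter (fun f => v ∈ φ f), ∑ l, h v f l) / A - Z) := by
        rw [Finset.sum_comm]
        refine Finset.sum_congr rfl fun e _ => ?_
        rw [Finset.sum_sub_distrib, Finset.sum_add_distrib, Finset.sum_sub_distrib,
          ← Finset.mul_sum, ← Finset.mul_sum, ← Finset.sum_div, hcardlab]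
        congr 3
        rw [Finset.sum_comm]
        exact Finset.sum_congr rfl fun v _ => Finset.sum_comm
    _ ≤ ∑ e ∈ M, (Real.log A * Z - p * (Z * (1 / K - K / T))
        + (∑ v ∈ φ e, ∑ f ∈ S.filter (fun f => v ∈ φ f), ∑ l, h v f l) / A - Z) := by
        refine Finset.sum_le_sum fun e he => ?_
        have := mul_le_mul_of_nonneg_left (hlog e he) (Nat.cast_nonneg p : (0 : ℝ) ≤ p)
        linarith
    _ = M.card * (Real.log A * Z - p * (Z * (1 / K - K / T)) - Z)
        + (∑ e ∈ M, ∑ v ∈ φ e, ∑ f ∈ S.filter (fun f => v ∈ φ f), ∑ l, h v f l) / A := by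
        rw [Finset.sum_sub_distrib, Finset.sum_add_distrib, ← Finset.sum_div]
        simp only [Finset.sum_const, nsmul_eq_mul]
        ring
    _ ≤ M.card * (Real.log A * Z - p * (Z * (1 / K - K / T)) - Z)
        + (M.card * (K * (A * (Z * (1 / K + 1 / T)))) + Z * (T : ℝ) ^ p * (K * (B * M.card))) / A := by
        gcongr
    _ = Z * (M.card * (Real.log A - (K - 1) + (K * (K * (K - 1)) + K) / T
          + (T : ℝ) ^ p * K * B / A)) := by
        have hpc : (p : ℝ) = K * (K - 1) := by
          rw [hp]; push_cast [Nat.cast_sub (by omega : 1 ≤ K)]; rfl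
        rw [hpc]
        field_simp
        ring
    _ ≤ _ := by
        have hK2 : (2 : ℝ) ≤ K := by exact_mod_cast hK
        gcongr
        nlinarith

open Classical in
/-- An upper bound `(A / e ^ (K - 1)) ^ (|U| / K)`, up to lower-order terms, for the number of perfect
matchings of a `K`-uniform hypergraph with degrees at most `A`, provided that for every perfect
matching `M` few edges meet some edge of `M` in two or more vertices. -/
theorem card_isPM_le {V E : Type*} [Fintype V] [DecidableEq V] (φ : E → Finset V)
    (S : Finset E) (U : Finset V) (K T : ℕ) (hK : 2 ≤ K) (hT : 1 ≤ T)
    (hU : ∀ e ∈ S, φ e ⊆ U) (hcard : ∀ e ∈ S, (φ e).card = K) (A B : ℝ) (hA : 0 < A)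
    (hdeg : ∀ v ∈ U, ((S.filter fun f => v ∈ φ f).card : ℝ) ≤ A)
    (hbad : ∀ M ⊆ S, IsPM φ U M →
      ((S.filter fun f => ∃ g ∈ M, 2 ≤ (φ g ∩ φ f).card).card : ℝ) ≤ B * M.card) :
    ((S.powerset.filter (IsPM φ U)).card : ℝ) ≤ Real.exp (U.card / K *
        (Real.log A - (K - 1) + K ^ 3 / T + (T : ℝ) ^ (K * (K - 1)) * K * B / A)) := by
  have hT' : (0 : ℝ) < T := by exact_mod_cast hT
  have hK' : (0 : ℝ) < K := by exact_mod_cast (by omega : 0 < K)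
  have hne : ∀ e ∈ S, (φ e).Nonempty := fun e he => Finset.card_pos.mp (by rw [hcard e he]; omega)
  set L := U.card / K *
        (Real.log A - (K - 1) + K ^ 3 / T + (T : ℝ) ^ (K * (K - 1)) * K * B / A) with hL
  set Z : ℝ := (T : ℝ) ^ Fintype.card V with hZ
  have hZ0 : 0 < Z := by positivity
  have hcardlab : ∑ _l : V → Fin T, (1 : ℝ) = Z := by simp [hZ]
  -- Jensen's inequality, in the form of the tangent line to `exp` at `-L`
  have hlow : ∀ M ∈ S.powerset.filter (IsPM φ U), Z * Real.exp (-L) ≤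
      ∑ l : V → Fin T, ∏ e ∈ M, ((choices φ S (fun u => (l u : ℕ)) M e).card : ℝ)⁻¹ := by
    intro M hM
    obtain ⟨hMS, hM⟩ := Finset.mem_filter.mp hM
    rw [Finset.mem_powerset] at hMS
    have hMc : (M.card : ℝ) = U.card / K := by
      rw [eq_div_iff hK'.ne', ← hM.biUnion_eq, Finset.card_biUnion fun a ha b hb hab =>
        hM.pairwiseDisjoint ha hb hab, Finset.sum_congr rfl fun e he => hcard e (hMS he)]
      simp
    have hX := sum_labels_log_le φ S U K T hK hT hU hcard A B hA hdeg M hMS hM (hbad M hMS hM)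
    rw [hMc, ← hL, ← hZ] at hX
    set X : (V → Fin T) → ℝ := fun l =>
      ∑ e ∈ M, Real.log ((choices φ S (fun u => (l u : ℕ)) M e).card) with hXdef
    calc Z * Real.exp (-L) ≤ Real.exp (-L) * ((1 + L) * Z - ∑ l, X l) := by
          rw [mul_comm]
          refine mul_le_mul_of_nonneg_left ?_ (Real.exp_pos _).le
          linarith
      _ = ∑ l : V → Fin T, Real.exp (-L) * ((1 + L) * 1 - X l) := by
          rw [← Finset.mul_sum, Finset.sum_sub_distrib, ← Finset.mul_sum, hcardlab]
      _ ≤ ∑ l : V → Fin T, Real.exp (-X l) := by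
          refine Finset.sum_le_sum fun l _ => ?_
          have h1 : Real.exp (-X l) = Real.exp (-L) * Real.exp (L - X l) := by
            rw [← Real.exp_add]; congr 1; ring
          rw [h1]
          refine mul_le_mul_of_nonneg_left ?_ (Real.exp_pos _).le
          linarith [Real.add_one_le_exp (L - X l)]
      _ = _ := by
          refine Finset.sum_congr rfl fun l _ => ?_
          rw [hXdef]
          dsimp only
          rw [← Finset.sum_neg_distrib, Real.exp_sum]
          refine Finset.prod_congr rfl fun e he => ?_
          rw [Real.exp_neg, Real.exp_log]
          exact_mod_cast Finset.card_pos.mpr ⟨e, self_mem_choices hM hMS hne he⟩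
  have hup : ∑ M ∈ S.powerset.filter (IsPM φ U), ∑ l : V → Fin T,
      ∏ e ∈ M, ((choices φ S (fun u => (l u : ℕ)) M e).card : ℝ)⁻¹ ≤ Z := by
    rw [Finset.sum_comm, ← hcardlab]
    exact Finset.sum_le_sum fun l _ => sum_prod_inv_choices_le_one φ S hne _ U
  have h1 := (Finset.sum_le_sum hlow).trans hup
  rw [Finset.sum_const, nsmul_eq_mul, Real.exp_neg] at h1
  have hE := Real.exp_pos L
  rw [mul_comm Z, ← mul_assoc, ← div_eq_mul_inv] at h1
  have h2 := (mul_le_iff_le_one_left hZ0).mp h1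
  exact (div_le_one hE).mp h2

/-! ### Steiner systems -/

open Classical in
/-- An edge containing `w` is determined by any of its `r`-subsets containing `w`. -/
theorem IsSteinerSystem.card_filter_superset_le {n q r : ℕ} {S : Finset (Finset (Fin n))}
    (hS : IsSteinerSystem n q r S) (hrq : r ≤ q) (w : Finset (Fin n)) (hw : w.card ≤ r) :
    (S.filter (w ⊆ ·)).card ≤ n.choose (r - w.card) := by
  have hex : ∀ f ∈ S.filter (w ⊆ ·), ∃ t, w ⊆ t ∧ t ⊆ f ∧ t.card = r := by
    intro f hf
    obtain ⟨hfS, hwf⟩ := Finset.mem_filter.mp hf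
    exact Finset.exists_subsuperset_card_eq hwf hw (by rw [hS.1 f hfS]; exact hrq)
  choose! t hwt htf htc using hex
  calc (S.filter (w ⊆ ·)).card
      ≤ ((Finset.univ : Finset (Fin n)).powersetCard (r - w.card)).card := by
        refine Finset.card_le_card_of_injOn (fun f => t f \ w) (fun f hf => ?_) ?_
        · rw [Finset.mem_coe, Finset.mem_powersetCard]
          exact ⟨Finset.subset_univ _, by rw [Finset.card_sdiff_of_subset (hwt f hf), htc f hf]⟩
        · intro f hf g hg hfg
          dsimp only at hfg
          have htt : t f = t g := by
            rw [← Finset.sdiff_union_of_subset (hwt f hf), ← Finset.sdiff_union_of_subset (hwt g hg),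
              hfg]
          exact (hS.2 (t f) (htc f hf)).unique
            ⟨(Finset.mem_filter.mp hf).1, htf f hf⟩
            ⟨(Finset.mem_filter.mp hg).1, htt ▸ htf g hg⟩
    _ = _ := by rw [Finset.card_powersetCard, Finset.card_univ, Fintype.card_fin]

open Classical in
theorem IsSteinerSystem.isPM {n q s : ℕ} {M : Finset (Finset (Fin n))}
    (hM : IsSteinerSystem n q s M) :
    IsPM (fun e : Finset (Fin n) => e.powersetCard s) (Finset.univ.powersetCard s) M := by
  refine ⟨fun e _ => Finset.powersetCard_mono (Finset.subset_univ e), fun v hv => ?_⟩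
  have hvc := (Finset.mem_powersetCard.mp hv).2
  obtain ⟨e, ⟨he, hve⟩, huniq⟩ := hM.2 v hvc
  exact ⟨e, ⟨he, Finset.mem_powersetCard.mpr ⟨hve, hvc⟩⟩, fun g hg =>
    huniq g ⟨hg.1, (Finset.mem_powersetCard.mp hg.2).1⟩⟩

open Classical in
/-- Two `q`-sets sharing two `s`-subsets share an `(s + 1)`-subset `w`; there are few choices of `w`
inside members of `M`, and few members of `S` contain a given `w`. The count includes the members of
`M` themselves. -/
theorem IsSteinerSystem.card_bad_le {n q r s : ℕ} {S : Finset (Finset (Fin n))}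
    (hS : IsSteinerSystem n q r S) (hrq : r ≤ q) (hsr : s < r)
    (M : Finset (Finset (Fin n))) (hMS : M ⊆ S) :
    ((S.filter fun f => ∃ g ∈ M, 2 ≤ (g.powersetCard s ∩ f.powersetCard s).card).card : ℝ)
      ≤ (q.choose (s + 1) * n.choose (r - (s + 1)) : ℕ) * M.card := by
  have hsub : (S.filter fun f => ∃ g ∈ M, 2 ≤ (g.powersetCard s ∩ f.powersetCard s).card) ⊆
      M.biUnion fun g => (g.powersetCard (s + 1)).biUnion fun w => S.filter (w ⊆ ·) := by
    intro f hf
    obtain ⟨hfS, g, hg, h2⟩ := Finset.mem_filter.mp hf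
    have heq : g.powersetCard s ∩ f.powersetCard s = (g ∩ f).powersetCard s := by
      ext t
      simp only [Finset.mem_inter, Finset.mem_powersetCard, Finset.subset_inter_iff]
      tauto
    rw [heq, Finset.card_powersetCard] at h2
    have hc : s + 1 ≤ (g ∩ f).card := by
      by_contra hlt
      rcases Nat.lt_or_ge (g ∩ f).card s with h | h
      · rw [Nat.choose_eq_zero_of_lt h] at h2; omega
      · have : (g ∩ f).card = s := by omega
        rw [this, Nat.choose_self] at h2; omega
    obtain ⟨w, hw, hwc⟩ := Finset.exists_subset_card_eq hc
    rw [Finset.subset_inter_iff] at hw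
    exact Finset.mem_biUnion.mpr ⟨g, hg, Finset.mem_biUnion.mpr
      ⟨w, Finset.mem_powersetCard.mpr ⟨hw.1, hwc⟩, Finset.mem_filter.mpr ⟨hfS, hw.2⟩⟩⟩
  have : (S.filter fun f => ∃ g ∈ M, 2 ≤ (g.powersetCard s ∩ f.powersetCard s).card).card
      ≤ q.choose (s + 1) * n.choose (r - (s + 1)) * M.card := by
    refine (Finset.card_le_card hsub).trans ?_
    rw [mul_comm]
    refine Finset.card_biUnion_le_card_mul _ _ _ fun g hg => ?_
    have hgc : (g.powersetCard (s + 1)).card = q.choose (s + 1) := by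
      rw [Finset.card_powersetCard, hS.1 g (hMS hg)]
    rw [← hgc]
    refine Finset.card_biUnion_le_card_mul _ _ _ fun w hw => ?_
    have hwc := (Finset.mem_powersetCard.mp hw).2
    rw [← hwc]
    exact hS.card_filter_superset_le hrq w (by omega)
  exact_mod_cast this

theorem steiner_subsystems_upper_bound :
    ∀ q r r' : ℕ, 1 ≤ r' → r' < r → r < q → ∀ ε : ℝ, 0 < ε → ∃ N : ℕ, ∀ n : ℕ, N ≤ n →
      ∀ S : Finset (Finset (Fin n)), IsSteinerSystem n q r S →
        (Nat.card {S' : Finset (Finset (Fin n)) //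
            S' ⊆ S ∧ IsSteinerSystem n q r' S'} : ℝ) ≤
          ((1 + ε) * (n.choose (r - r')) / Real.exp ((q.choose r' : ℝ) - 1)) ^
            ((n.choose r' : ℝ) / (q.choose r' : ℝ)) := by
  classical
  intro q r s hs hsr hrq ε hε
  set K := q.choose s with hK
  have hK2 : 2 ≤ K := by
    have h1 : q.choose s ≠ 0 := (Nat.choose_pos (by omega)).ne'
    have h2 : q.choose s ≠ 1 := by
      rw [Ne, Nat.choose_eq_one_iff]; omega
    omega
  have hK' : (0 : ℝ) < K := by exact_mod_cast (by omega : 0 < K)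
  set δ := Real.log (1 + ε) with hδ
  have hδ0 : 0 < δ := Real.log_pos (by linarith)
  obtain ⟨T₀, hT₀⟩ := exists_nat_ge ((K : ℝ) ^ 3 / (δ / 2))
  set T := T₀ + 1 with hTdef
  have hT : 1 ≤ T := by omega
  have hT' : (0 : ℝ) < T := by exact_mod_cast hT
  have hTδ : (K : ℝ) ^ 3 / T ≤ δ / 2 := by
    rw [div_le_iff₀ hT']
    rw [div_le_iff₀ (by positivity)] at hT₀
    have : (T : ℝ) = T₀ + 1 := by rw [hTdef]; push_cast; rfl
    rw [this]
    nlinarith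
  obtain ⟨j, hj⟩ : ∃ j, r - s = j + 1 := ⟨r - s - 1, by omega⟩
  -- `N₀` is taken so that the bad edges contribute at most `c / (n - j) ≤ δ / 2`, while `T` makes
  -- the discretisation error at most `δ / 2`.
  set c : ℝ := (T : ℝ) ^ (K * (K - 1)) * K * q.choose (s + 1) * (j + 1) with hc
  obtain ⟨N₀, hN₀⟩ := exists_nat_ge (c / (δ / 2))
  refine ⟨N₀ + j + 1, fun n hn S hS => ?_⟩
  set A : ℝ := ((n.choose (r - s) : ℕ) : ℝ) with hA
  have hA0 : 0 < A := by
    rw [hA]; exact_mod_cast Nat.choose_pos (by omega)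
  -- consecutive binomial coefficients have ratio `(j + 1) / (n - j)`
  have hratio : (n.choose j : ℝ) / A = (j + 1) / ((n : ℝ) - j) := by
    have h1 := Nat.choose_succ_right_eq n j
    have h2 : (0 : ℝ) < (n : ℝ) - j := by
      have : (j : ℝ) + 1 ≤ n := by exact_mod_cast (by omega : j + 1 ≤ n)
      linarith
    rw [div_eq_div_iff hA0.ne' h2.ne', hA, hj]
    have h3 : ((n.choose (j + 1) * (j + 1) : ℕ) : ℝ) = (n.choose j * (n - j) : ℕ) := by rw [h1]
    push_cast [Nat.cast_sub (by omega : j ≤ n)] at h3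
    linarith
  have hBδ : (T : ℝ) ^ (K * (K - 1)) * K * (q.choose (s + 1) * n.choose (r - (s + 1)) : ℕ) / A
      ≤ δ / 2 := by
    have hrj : r - (s + 1) = j := by omega
    have e1 : (T : ℝ) ^ (K * (K - 1)) * K * (q.choose (s + 1) * n.choose (r - (s + 1)) : ℕ) / A
        = c / ((n : ℝ) - j) := by
      rw [hrj]
      push_cast
      calc _ = (T : ℝ) ^ (K * (K - 1)) * K * q.choose (s + 1) * ((n.choose j : ℝ) / A) := by ring
        _ = _ := by rw [hratio, hc]; ring
    have h2 : (N₀ : ℝ) + 1 ≤ (n : ℝ) - j := by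
      have : (N₀ : ℝ) + j + 1 ≤ n := by exact_mod_cast hn
      linarith
    have h3 : (0 : ℝ) < (n : ℝ) - j := by linarith [(Nat.cast_nonneg N₀ : (0 : ℝ) ≤ N₀)]
    rw [e1, div_le_iff₀ h3]
    rw [div_le_iff₀ (by positivity)] at hN₀
    nlinarith
  have hmain := card_isPM_le (fun e : Finset (Fin n) => e.powersetCard s) S
    (Finset.univ.powersetCard s) K T hK2 hT
    (fun e _ => Finset.powersetCard_mono (Finset.subset_univ e))
    (fun e he => by rw [Finset.card_powersetCard, hS.1 e he]) A
    ((q.choose (s + 1) * n.choose (r - (s + 1)) : ℕ) : ℝ) hA0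
    (fun v hv => by
      have hvc := (Finset.mem_powersetCard.mp hv).2
      have h1 := hS.card_filter_superset_le hrq.le v (by omega)
      rw [hvc] at h1
      rw [hA]
      refine le_trans (Nat.cast_le.mpr (Finset.card_le_card fun f hf => ?_)) (Nat.cast_le.mpr h1)
      obtain ⟨hfS, hvf⟩ := Finset.mem_filter.mp hf
      exact Finset.mem_filter.mpr ⟨hfS, (Finset.mem_powersetCard.mp hvf).1⟩)
    (fun M hMS _ => hS.card_bad_le hrq.le hsr M hMS)
  have hcount : (Nat.card {S' : Finset (Finset (Fin n)) //
      S' ⊆ S ∧ IsSteinerSystem n q s S'} : ℝ) ≤ ((S.powerset.filter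
        (IsPM (fun e : Finset (Fin n) => e.powersetCard s)
          (Finset.univ.powersetCard s))).card : ℝ) := by
    rw [Nat.card_eq_fintype_card, Fintype.card_subtype]
    refine Nat.cast_le.mpr (Finset.card_le_card fun M hM => ?_)
    obtain ⟨-, hMS, hM⟩ := Finset.mem_filter.mp hM
    exact Finset.mem_filter.mpr ⟨Finset.mem_powerset.mpr hMS, hM.isPM⟩
  refine hcount.trans (hmain.trans ?_)
  rw [Real.rpow_def_of_pos (by positivity), Finset.card_powersetCard, Finset.card_univ,
    Fintype.card_fin, Real.log_div (by positivity) (Real.exp_pos _).ne',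
    Real.log_mul (by positivity) hA0.ne', Real.log_exp, mul_comm]
  refine Real.exp_le_exp.mpr (mul_le_mul_of_nonneg_right ?_ (by positivity))
  linarith
end

section
/- Let k ≥ 1 be an integer, let n = 2^(2k) + 1, and write a = 2^k regarded as an element of ZMod n. For every y1, y2 ∈ ZMod n there exists a unique pair (y3, y4) ∈ ZMod n × ZMod n satisfying the eight equations: (a+1)·y1 = a·y3 + y4; (a+1)·y2 = a·y4 + y3; (a+1)·y3 = a·y2 + y1; (a+1)·y4 = a·y1 + y2; (a−1)·y3 = a·y1 − y2; (a−1)·y2 = a·y3 − y4; (a−1)·y1 = a·y4 − y3; and (a−1)·y4 = a·y2 − y1. -/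
/-!
Write `a = 2 ^ k`. The modulus is `a ^ 2 + 1`, so `a ^ 2 = -1`, and it is odd, so `2` is invertible.
The first two equations form a linear system in `(y3, y4)` of determinant `a ^ 2 - 1 = -2`, hence
they have exactly one solution,
`y3 = ((1 - a) y1 + (1 + a) y2) / 2`, `y4 = ((1 + a) y1 + (1 - a) y2) / 2`,
and the other six equations hold for this pair by `a ^ 2 = -1`.
-/

theorem unique_flip_pair (k : ℕ) (hk : 1 ≤ k)
    (y1 y2 : ZMod (2 ^ (2 * k) + 1)) :
    ∃! p : ZMod (2 ^ (2 * k) + 1) × ZMod (2 ^ (2 * k) + 1),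
      ((2 : ZMod (2 ^ (2 * k) + 1)) ^ k + 1) * y1 = 2 ^ k * p.1 + p.2 ∧
      ((2 : ZMod (2 ^ (2 * k) + 1)) ^ k + 1) * y2 = 2 ^ k * p.2 + p.1 ∧
      ((2 : ZMod (2 ^ (2 * k) + 1)) ^ k + 1) * p.1 = 2 ^ k * y2 + y1 ∧
      ((2 : ZMod (2 ^ (2 * k) + 1)) ^ k + 1) * p.2 = 2 ^ k * y1 + y2 ∧
      ((2 : ZMod (2 ^ (2 * k) + 1)) ^ k - 1) * p.1 = 2 ^ k * y1 - y2 ∧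
      ((2 : ZMod (2 ^ (2 * k) + 1)) ^ k - 1) * y2 = 2 ^ k * p.1 - p.2 ∧
      ((2 : ZMod (2 ^ (2 * k) + 1)) ^ k - 1) * y1 = 2 ^ k * p.2 - p.1 ∧
      ((2 : ZMod (2 ^ (2 * k) + 1)) ^ k - 1) * p.2 = 2 ^ k * y2 - y1 := by
  -- The two facts about the modulus: `a ^ 2 = -1`, and `2` has an inverse `b`.
  have ha : ((2 : ZMod (2 ^ (2 * k) + 1)) ^ k) ^ 2 = -1 := by
    have h := ZMod.natCast_self (2 ^ (2 * k) + 1)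
    push_cast at h
    rw [← pow_mul, mul_comm k 2]
    exact eq_neg_of_add_eq_zero_left h
  obtain ⟨b, hb⟩ : ∃ b : ZMod (2 ^ (2 * k) + 1), 2 * b = 1 := by
    refine ⟨-2 ^ (2 * k - 1), ?_⟩
    have h : (2 : ZMod (2 ^ (2 * k) + 1)) * 2 ^ (2 * k - 1) = (2 ^ k) ^ 2 := by
      rw [← pow_succ', ← pow_mul]
      congr 1
      omega
    linear_combination -h - ha
  generalize (2 : ZMod (2 ^ (2 * k) + 1)) ^ k = a at *
  refine ⟨(b * ((1 - a) * y1 + (1 + a) * y2), b * ((1 + a) * y1 + (1 - a) * y2)), ?_, ?_⟩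
  · dsimp only
    refine ⟨?_, ?_, ?_, ?_, ?_, ?_, ?_, ?_⟩
    · linear_combination (b * (y1 - y2)) * ha - ((a + 1) * y1) * hb
    · linear_combination (b * (y2 - y1)) * ha - ((a + 1) * y2) * hb
    · linear_combination (b * (y2 - y1)) * ha + (a * y2 + y1) * hb
    · linear_combination (b * (y1 - y2)) * ha + (a * y1 + y2) * hb
    · linear_combination (b * (y2 - y1)) * ha + (a * y1 - y2) * hb
    · linear_combination (b * (y1 - y2)) * ha - ((a - 1) * y2) * hb
    · linear_combination (b * (y2 - y1)) * ha - ((a - 1) * y1) * hb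
    · linear_combination (b * (y1 - y2)) * ha + (a * y2 - y1) * hb
  · rintro ⟨y3, y4⟩ ⟨h1, h2, -⟩
    dsimp only at h1 h2
    -- Eliminating one unknown from the first two equations determines `2 * y3` and `2 * y4`.
    ext
    · dsimp only
      linear_combination (b * a) * h1 - b * h2 + (b * (y3 - y1)) * ha - y3 * hb
    · dsimp only
      linear_combination (b * a) * h2 - b * h1 + (b * (y4 - y2)) * ha - y4 * hb
end

section
/- Let n ≥ 1 and let σ be an n-queens configuration. For 1 ≤ i, j ≤ n let D(i, j) denote the number of squares (i', j') with 1 ≤ i', j' ≤ n, (i', j') ≠ (i, j), and |i − i'| = |j − j'|. Then Σ_{i=1}^{n} D(i, σ(i)) ≥ (5/4)·n² − 6·n. -/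
/-! The two diagonals through `(i, j)` contain `n - |i - j|` and `n - |i + j - (n - 1)|` squares,
and `|i - j| + |i + j - (n - 1)| = max (X i) (X j)` with `X i = |2 i - (n - 1)|`, so that
`D n i j ≥ 2 (n - 1) - max (X i) (X j)` (`D_lower_bound`).
For the threshold `T = n / 2` one has `max a b ≤ T + (a - T)⁺ + (b - T)⁺`. Summing over the queens
and reindexing by the bijection `σ` gives `∑ max (X i) (X (σ i)) ≤ n T + 2 ∑ (X i - T)⁺`, and the last sum is at
most `n ^ 2 / 8` by comparison of the convex function `s ↦ (|s| - T)⁺` with its integral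
(`sum_excess_le`). Hence the total is at least `2 n (n - 1) - 3 n ^ 2 / 4 = 5 n ^ 2 / 4 - 2 n`. -/

/-- A classical `n`-queens configuration: a permutation `σ` of `Fin n` such that
no two queens share a diagonal, i.e. for `i ≠ j`, `σ i - σ j ∉ {i - j, j - i}` as integers. -/
def IsQueens (n : ℕ) (σ : Equiv.Perm (Fin n)) : Prop :=
  ∀ i j : Fin n, i ≠ j →
    ((σ i : ℤ) - (σ j : ℤ) ≠ (i : ℤ) - (j : ℤ) ∧
     (σ i : ℤ) - (σ j : ℤ) ≠ (j : ℤ) - (i : ℤ))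

/-- `D n i j` is the number of squares of the `n × n` board, other than `(i, j)` itself,
sharing a diagonal or anti-diagonal with `(i, j)`. -/
def D (n : ℕ) (i j : Fin n) : ℕ :=
  (Finset.univ.filter (fun p : Fin n × Fin n =>
    p ≠ (i, j) ∧ |(i : ℤ) - (p.1 : ℤ)| = |(j : ℤ) - (p.2 : ℤ)|)).card

/-- The diagonal `p.1 - p.2 = d` has at least `n - |d|` squares. -/
lemma card_diagonal_ge (n : ℕ) (d : ℤ) :
    (n : ℤ) - |d| ≤ ((Finset.univ.filter
      (fun p : Fin n × Fin n => (p.1 : ℤ) - (p.2 : ℤ) = d)).card : ℤ) := by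
  have h : (Finset.range (n - d.natAbs)).card ≤ (Finset.univ.filter
      (fun p : Fin n × Fin n => (p.1 : ℤ) - (p.2 : ℤ) = d)).card := by
    -- the `k`-th square of the diagonal is `(k + d⁺, k + d⁻)`
    refine Finset.card_le_card_of_forall_subsingleton
      (fun k p => (p.1 : ℕ) = k + d.toNat) (fun k hk => ?_) (fun p _ => ?_)
    · rw [Finset.mem_range] at hk
      refine ⟨(⟨k + d.toNat, by omega⟩, ⟨k + (-d).toNat, by omega⟩), ?_, rfl⟩
      simp only [Finset.mem_filter, Finset.mem_univ, true_and]
      omega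
    · rintro k ⟨_, hk⟩ l ⟨_, hl⟩
      omega
  rw [Finset.card_range] at h
  rw [Int.abs_eq_natAbs]
  omega

/-- The anti-diagonal `p.1 + p.2 = n - 1 + d` has at least `n - |d|` squares. -/
lemma card_antidiagonal_ge (n : ℕ) (d : ℤ) :
    (n : ℤ) - |d| ≤ ((Finset.univ.filter
      (fun p : Fin n × Fin n => (p.1 : ℤ) + (p.2 : ℤ) = n - 1 + d)).card : ℤ) := by
  refine (card_diagonal_ge n d).trans ?_
  refine Nat.cast_le.mpr ?_
  -- reflect the second coordinate
  refine Finset.card_le_card_of_injOn (fun p => (p.1, Fin.rev p.2)) ?_ ?_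
  · intro p hp
    simp only [Finset.coe_filter, Finset.mem_univ, true_and, Set.mem_ofPred_eq, Fin.val_rev]
      at hp ⊢
    omega
  · rintro ⟨a, b⟩ _ ⟨c, e⟩ _ h
    simpa using h

/-- The two diagonals through `(i, j)` meet only in `(i, j)`, so `D n i j` is the sum of their
sizes minus `2`. -/
lemma D_lower_bound (n : ℕ) (i j : Fin n) :
    2 * ((n : ℤ) - 1) - max |2 * (i : ℤ) + 1 - n| |2 * (j : ℤ) + 1 - n| ≤ (D n i j : ℤ) := by
  have h1 := card_diagonal_ge n ((i : ℤ) - j)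
  have h2 := card_antidiagonal_ge n ((i : ℤ) + j - (n - 1))
  set A := Finset.univ.filter (fun p : Fin n × Fin n => (p.1 : ℤ) - (p.2 : ℤ) = (i : ℤ) - j)
  set B := Finset.univ.filter
    (fun p : Fin n × Fin n => (p.1 : ℤ) + (p.2 : ℤ) = n - 1 + ((i : ℤ) + j - (n - 1)))
  have h3 := Finset.card_union_add_card_inter A B
  have h4 : (A ∩ B).card ≤ 1 := by
    rw [← Finset.card_singleton (i, j)]
    refine Finset.card_le_card fun p hp => ?_
    simp only [A, B, Finset.mem_inter, Finset.mem_filter, Finset.mem_univ, true_and] at hp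
    rw [Finset.mem_singleton, Prod.ext_iff, Fin.ext_iff, Fin.ext_iff]
    dsimp only
    omega
  have h5 : ((A ∪ B).erase (i, j)).card ≤ D n i j := by
    refine Finset.card_le_card fun p hp => ?_
    simp only [A, B, Finset.mem_erase, Finset.mem_union, Finset.mem_filter, Finset.mem_univ,
      true_and] at hp ⊢
    refine ⟨hp.1, ?_⟩
    rw [abs_eq_abs]
    omega
  have h6 := Finset.pred_card_le_card_erase (s := A ∪ B) (a := (i, j))
  have h7 : |(i : ℤ) - j| + |(i : ℤ) + j - (n - 1)|
      ≤ max |2 * (i : ℤ) + 1 - n| |2 * (j : ℤ) + 1 - n| := by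
    grind
  omega

/-- Midpoint inequality for the convex function `s ↦ s⁺`, whose antiderivative is
`s ↦ (s⁺) ^ 2 / 2`. -/
lemma posPart_le_diff (a : ℝ) :
    max a 0 ≤ (max (a + 1) 0) ^ 2 / 4 - (max (a - 1) 0) ^ 2 / 4 := by
  rcases le_total a 0 with h | h <;> rcases le_total (a + 1) 0 with h' | h' <;>
    rcases le_total (a - 1) 0 with h'' | h'' <;> simp only [max_eq_left, max_eq_right, *] <;>
    nlinarith [sq_nonneg (a - 1)]

/-- The part of `|2 i - (n - 1)|` exceeding `n / 2` has total at most `n ^ 2 / 8`. -/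
lemma sum_excess_le (n : ℕ) :
    ∑ i : Fin n, max (|2 * (i : ℝ) + 1 - n| - n / 2) 0 ≤ (n : ℝ) ^ 2 / 8 := by
  rw [Fin.sum_univ_eq_sum_range (fun i : ℕ => max (|2 * (i : ℝ) + 1 - n| - n / 2) 0) n]
  -- an antiderivative of `u ↦ (|2 u - n| - n / 2)⁺`
  let G : ℕ → ℝ := fun i =>
    (max (2 * (i : ℝ) - n - n / 2) 0) ^ 2 / 4 - (max (n - 2 * (i : ℝ) - n / 2) 0) ^ 2 / 4
  have step : ∀ i ∈ Finset.range n,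
      max (|2 * (i : ℝ) + 1 - n| - n / 2) 0 ≤ G (i + 1) - G i := by
    intro i _
    have h1 := posPart_le_diff (2 * (i : ℝ) + 1 - n - n / 2)
    have h2 := posPart_le_diff (-(2 * (i : ℝ) + 1 - n) - n / 2)
    have h3 : max (|2 * (i : ℝ) + 1 - n| - n / 2) 0 ≤
        max (2 * (i : ℝ) + 1 - n - n / 2) 0 + max (-(2 * (i : ℝ) + 1 - n) - n / 2) 0 := by
      grind
    refine h3.trans ((add_le_add h1 h2).trans (le_of_eq ?_))
    simp only [G]
    push_cast
    ring_nf
  refine (Finset.sum_le_sum step).trans ?_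
  rw [Finset.sum_range_sub]
  have hn : (0 : ℝ) ≤ n := n.cast_nonneg
  simp only [G, Nat.cast_zero]
  rw [max_eq_left (by linarith), max_eq_right (by linarith), max_eq_right (by linarith),
    max_eq_left (by linarith)]
  apply le_of_eq
  ring

theorem sum_diagonal_degrees_lower_bound (n : ℕ) (hn : 1 ≤ n)
    (σ : Equiv.Perm (Fin n)) (hσ : IsQueens n σ) :
    (5 / 4 : ℝ) * n ^ 2 - 6 * n ≤ ∑ i : Fin n, (D n i (σ i) : ℝ) := by
  have key : ∀ i : Fin n, 2 * ((n : ℝ) - 1) - n / 2 - max (|2 * (i : ℝ) + 1 - n| - n / 2) 0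
      - max (|2 * (σ i : ℝ) + 1 - n| - n / 2) 0 ≤ (D n i (σ i) : ℝ) := by
    intro i
    have h : 2 * ((n : ℝ) - 1) - max |2 * (i : ℝ) + 1 - n| |2 * (σ i : ℝ) + 1 - n|
        ≤ (D n i (σ i) : ℝ) := by
      exact_mod_cast D_lower_bound n i (σ i)
    grind
  have hsum := Finset.sum_le_sum fun i (_ : i ∈ Finset.univ) => key i
  rw [Finset.sum_sub_distrib, Finset.sum_sub_distrib,
    Equiv.sum_comp σ (fun i : Fin n => max (|2 * (i : ℝ) + 1 - n| - n / 2) 0)] at hsum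
  simp only [Finset.sum_const, Finset.card_univ, Fintype.card_fin, nsmul_eq_mul] at hsum
  have hex := sum_excess_le n
  have hn0 : (0 : ℝ) ≤ n := n.cast_nonneg
  nlinarith
end

section
/- Let n ≥ 2 and for each i ∈ {1,…,n} let a_i, b_i, c_i ≥ 0 be real numbers with a_i + b_i + c_i = n − 1, and suppose Σ_{i=1}^{n} (2·a_i + b_i) ≥ (5/4)·n² − 6·n. Then for every real x with 0 < x < 1, Σ_{i=1}^{n} log(a_i·x² + b_i·x + c_i) ≤ n · log((5/8)·n·x² + (3/8)·n + 2), where log denotes the natural logarithm. -/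
/-!
Concavity of the logarithm, in the form of its tangent line at
`T = (5/8) n x² + (3/8) n + 2`, gives `log y ≤ log T + y / T - 1`, so it is enough that the
quadratics `y i = a i x² + b i x + c i` satisfy `∑ i, y i ≤ n T`. By AM-GM, `x ≤ (x² + 1) / 2`, hence
`y i ≤ (n - 1) - (2 a i + b i) (1 - x²) / 2`; summing and inserting the lower bound on
`∑ i, (2 a i + b i)` yields `∑ i, y i ≤ n (T - 3 x²)`.
-/

theorem log_sum_upper_bound (n : ℕ) (hn : 2 ≤ n)
    (a b c : Fin n → ℝ)
    (ha : ∀ i, 0 ≤ a i) (hb : ∀ i, 0 ≤ b i) (hc : ∀ i, 0 ≤ c i)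
    (hsum : ∀ i, a i + b i + c i = (n : ℝ) - 1)
    (htotal : (5 / 4 : ℝ) * n ^ 2 - 6 * n ≤ ∑ i, (2 * a i + b i))
    (x : ℝ) (hx0 : 0 < x) (hx1 : x < 1) :
    ∑ i, Real.log (a i * x ^ 2 + b i * x + c i) ≤
      n * Real.log ((5 / 8 : ℝ) * n * x ^ 2 + (3 / 8 : ℝ) * n + 2) := by
  have hn' : (2 : ℝ) ≤ n := by exact_mod_cast hn
  set T : ℝ := (5 / 8 : ℝ) * n * x ^ 2 + (3 / 8 : ℝ) * n + 2 with hT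
  have hTpos : 0 < T := by positivity
  have hx2 : x ^ 2 < 1 := by nlinarith
  -- Since `x² ≤ x` and `x² ≤ 1`, each quadratic is at least `(a i + b i + c i) x² = (n - 1) x²`.
  have hpos : ∀ i, 0 < a i * x ^ 2 + b i * x + c i := fun i => by
    have h1 : 0 < ((n : ℝ) - 1) * x ^ 2 := mul_pos (by linarith) (by positivity)
    have h2 : 0 ≤ b i * (x * (1 - x)) := mul_nonneg (hb i) (mul_nonneg hx0.le (by linarith))
    have h3 : 0 ≤ c i * (1 - x ^ 2) := mul_nonneg (hc i) (by linarith)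
    rw [← hsum i] at h1
    linarith
  have hlog : ∀ i, Real.log (a i * x ^ 2 + b i * x + c i) ≤
      Real.log T - 1 + (a i * x ^ 2 + b i * x + c i) / T := fun i => by
    have h := Real.log_le_sub_one_of_pos (div_pos (hpos i) hTpos)
    rw [Real.log_div (hpos i).ne' hTpos.ne'] at h
    linarith
  have hquad : ∀ i, a i * x ^ 2 + b i * x + c i ≤
      ((n : ℝ) - 1) - (2 * a i + b i) * ((1 - x ^ 2) / 2) := fun i => by
    have h := mul_nonneg (hb i) (sq_nonneg (x - 1))
    rw [← hsum i]
    linarith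
  have hS : ∑ i, (a i * x ^ 2 + b i * x + c i) ≤ n * T := by
    have h1 := Finset.sum_le_sum fun i (_ : i ∈ Finset.univ) => hquad i
    rw [Finset.sum_sub_distrib, ← Finset.sum_mul] at h1
    simp only [Finset.sum_const, Finset.card_univ, Fintype.card_fin, nsmul_eq_mul] at h1
    have h2 := mul_le_mul_of_nonneg_right htotal (show 0 ≤ (1 - x ^ 2) / 2 by linarith)
    have h3 : 0 ≤ (n : ℝ) * x ^ 2 := by positivity
    rw [hT]
    linarith
  calc ∑ i, Real.log (a i * x ^ 2 + b i * x + c i)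
      ≤ ∑ i, (Real.log T - 1 + (a i * x ^ 2 + b i * x + c i) / T) :=
        Finset.sum_le_sum fun i _ => hlog i
    _ = n * (Real.log T - 1) + (∑ i, (a i * x ^ 2 + b i * x + c i)) / T := by
        rw [Finset.sum_add_distrib, ← Finset.sum_div]
        simp
        ring
    _ ≤ n * Real.log T := by
        have := (div_le_iff₀ hTpos).2 hS
        linarith
end
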